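/- For every P_9-free bipartite graph G and every enumeration π of its vertices, Algorithm 1 uses at most 6(χ*(G) + 1)^2 colors on the on-line graph (G, π), where χ*(G) is the on-line chromatic number of G. -/

import Mathlib

/-! ### P_n-free graphs -/

/-- `f` lists the vertices of an induced path on `n` vertices in `G`. -/
def IsInducedPath {V : Type*} (G : SimpleGraph V) (n : ℕ) (f : Fin n → V) : Prop :=
  Function.Injective f ∧
    ∀ a b : Fin n, G.Adj (f a) (f b) ↔ (a.val + 1 = b.val ∨ b.val + 1 = a.val)

/-- `G` contains no induced path on `n` vertices. -/
def PFree {V : Type*} (G : SimpleGraph V) (n : ℕ) : Prop :=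
  ¬ ∃ f : Fin n → V, IsInducedPath G n f

/-! ### On-line coloring algorithms and the on-line chromatic number -/

/-- A (deterministic) on-line coloring algorithm: upon presentation of the `(k+1)`-st vertex it
sees the induced subgraph on the first `k+1` vertices in order of presentation (modelled as a
graph on `Fin (k+1)`, the new vertex being the last one) and it outputs the color of the new
vertex. -/
def OnlineAlg : Type := (k : ℕ) → SimpleGraph (Fin (k + 1)) → ℕ

/-- The color that algorithm `A` assigns to the `i`-th presented vertex of the on-line graph
`G` (vertices presented in the order `0, 1, 2, …` of `Fin n`). -/
def runColor (A : OnlineAlg) {n : ℕ} (G : SimpleGraph (Fin n)) (i : Fin n) : ℕ :=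
  A i.val (G.comap (Fin.castLE i.isLt))

/-- An on-line algorithm is required to always produce a proper coloring. -/
def IsProperAlg (A : OnlineAlg) : Prop :=
  ∀ (n : ℕ) (G : SimpleGraph (Fin n)) (i j : Fin n),
    G.Adj i j → runColor A G i ≠ runColor A G j

/-- The number of colors that `A` uses on the on-line graph `G`. -/
def numColors (A : OnlineAlg) {n : ℕ} (G : SimpleGraph (Fin n)) : ℕ :=
  (Finset.univ.image (runColor A G)).card

/-- The on-line chromatic number of a finite graph `G`:
`χ*(G) = inf_A max_π A(G,π)`, the infimum over all proper on-line algorithms of the maximum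
over all enumerations `π` of the vertices of `G` of the number of colors used. -/
noncomputable def onlineChrom (V : Type) [Fintype V] (G : SimpleGraph V) : ℕ :=
  sInf { m : ℕ | ∃ A : OnlineAlg, IsProperAlg A ∧
          ∀ (n : ℕ) (π : Fin n ≃ V), numColors A (G.comap π) ≤ m }

/-! ### Algorithm 1 -/

/-- The three palettes of colors `a_i`, `b_i`, `c_i` used by Algorithm 1. -/
inductive PalColor : Type
  | a : ℕ → PalColor
  | b : ℕ → PalColor
  | c : ℕ → PalColor
  deriving DecidableEq

/-- The index of a color. -/
def PalColor.index : PalColor → ℕ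
  | a i => i
  | b i => i
  | c i => i

/-- A vertex `u` has color index `j` when its color is `a_j` or `b_j`. -/
def hasColorIndex (col : ℕ → PalColor) (u j : ℕ) : Prop :=
  col u = PalColor.a j ∨ col u = PalColor.b j

/-- Vertex set of `G_i[u]` at time `t` (vertices are presented in the order `0, 1, 2, …`):
the vertices presented before time `t` whose color has index between `1` and `i`,
together with `u`. -/
def domSet (col : ℕ → PalColor) (t i u : ℕ) : Set ℕ :=
  {w | (w < t ∧ 1 ≤ (col w).index ∧ (col w).index ≤ i) ∨ w = u}

/-- `x` and `y` are connected within the subgraph of `G` induced on `S`. -/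
def ReachIn (G : SimpleGraph ℕ) (S : Set ℕ) (x y : ℕ) : Prop :=
  ∃ (hx : x ∈ S) (hy : y ∈ S), (G.induce S).Reachable ⟨x, hx⟩ ⟨y, hy⟩

/-- `x` and `y` are joined by a walk of even length within the subgraph of `G` induced on `S`;
in a bipartite graph this says exactly that `x` and `y` are on the same side of their
(common) connected component. -/
def EvenReachIn (G : SimpleGraph ℕ) (S : Set ℕ) (x y : ℕ) : Prop :=
  ∃ (hx : x ∈ S) (hy : y ∈ S) (p : (G.induce S).Walk ⟨x, hx⟩ ⟨y, hy⟩), Even p.length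

/-- `C_i[u]` at time `t`: the connected component of `u` in the subgraph induced on
`domSet col t i u`. -/
def comp (G : SimpleGraph ℕ) (col : ℕ → PalColor) (t i u : ℕ) : Set ℕ :=
  {w | ReachIn G (domSet col t i u) u w}

/-- `C_i^y(u)` at time `t`: the connected component of `y` in `C_i(u) = C_i[u] \ {u}`. -/
def compMinus (G : SimpleGraph ℕ) (col : ℕ → PalColor) (t i u y : ℕ) : Set ℕ :=
  {w | ReachIn G (domSet col t i u \ {u}) y w}

/-- Color `a_i` is mixed in `C_i[t]` at time `t`: vertices on both sides of `C_i[t]`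
have color `a_i`. -/
def MixedA (G : SimpleGraph ℕ) (col : ℕ → PalColor) (t i : ℕ) : Prop :=
  ∃ x ∈ comp G col t i t, ∃ y ∈ comp G col t i t,
    col x = PalColor.a i ∧ col y = PalColor.a i ∧
    ¬ EvenReachIn G (domSet col t i t) x y

/-- `m = max {i ≥ 1 | a_i is mixed in C_i[t]} + 1` (with `max ∅ = 0`). -/
noncomputable def mIdx (G : SimpleGraph ℕ) (col : ℕ → PalColor) (t : ℕ) : ℕ :=
  sSup {i | 1 ≤ i ∧ MixedA G col t i} + 1

/-- `u'` is universal to `C_{j-1}[u]` (at time `t`): `u'` is adjacent to all vertices in one of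
the two sides of `C_{j-1}[u]`. -/
def UnivTo (G : SimpleGraph ℕ) (col : ℕ → PalColor) (t j u u' : ℕ) : Prop :=
  (∀ x ∈ comp G col t (j-1) u, EvenReachIn G (domSet col t (j-1) u) u x → G.Adj u' x) ∨
  (∀ x ∈ comp G col t (j-1) u, ¬ EvenReachIn G (domSet col t (j-1) u) u x → G.Adj u' x)

open Classical in
/-- One step of Algorithm 1: the color given to the vertex presented at time `t`, assuming that
`col` records the colors of the previously presented vertices `0, …, t-1`. -/
noncomputable def step (G : SimpleGraph ℕ) (col : ℕ → PalColor) (t : ℕ) : PalColor :=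
  let m := mIdx G col t
  let S := domSet col t m t
  let C := comp G col t m t
  let I1 : Set ℕ := {x ∈ C | EvenReachIn G S t x}
  let I2 : Set ℕ := {x ∈ C | ¬ EvenReachIn G S t x}
  if ∃ u ∈ I2, col u = PalColor.a m then PalColor.b m
  else if ∃ u ∈ I2, col u = PalColor.c m then PalColor.a m
  else if ∃ u ∈ I1 ∪ I2, ∃ u' ∈ I2, ∃ j : ℕ, hasColorIndex col u j ∧
      ((m : ℝ) - Real.sqrt (2 * m) + 2 ≤ (j : ℝ)) ∧ UnivTo G col t j u u'
    then PalColor.c m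
  else PalColor.a m

/-- The colors of the first `k` presented vertices under Algorithm 1 (junk elsewhere). -/
noncomputable def algoColAux (G : SimpleGraph ℕ) : ℕ → ℕ → PalColor
  | 0 => fun _ => PalColor.a 0
  | (k+1) => fun w => if w = k then step G (algoColAux G k) k else algoColAux G k w

/-- `algoCol G v` is the color that Algorithm 1 assigns to vertex `v` when the on-line graph `G`
is presented in the vertex order `0, 1, 2, …`. -/
noncomputable def algoCol (G : SimpleGraph ℕ) (v : ℕ) : PalColor :=
  algoColAux G (v + 1) v

/-- The on-line graph on `ℕ` obtained by presenting the vertices of `G` in the order given by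
the enumeration `π` (vertices `≥ n` are isolated). -/
def toNatGraph {V : Type*} (G : SimpleGraph V) {n : ℕ} (π : Fin n ≃ V) : SimpleGraph ℕ :=
  SimpleGraph.fromRel (fun i j => ∃ (hi : i < n) (hj : j < n), G.Adj (π ⟨i, hi⟩) (π ⟨j, hj⟩))

/-! ### Part I: forcing graphs -/

inductive ZV : ℕ → Type
  | base : Bool → ZV 0
  | root {k : ℕ} : ZV (k+1)
  | cl {k : ℕ} : ZV k → ZV (k+1)
  | cr {k : ℕ} : ZV k → ZV (k+1)

def zsd : (k : ℕ) → ZV k → Bool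
  | _, .base b => b
  | _, .root => false
  | _, .cl v => zsd _ v
  | _, .cr v => !(zsd _ v)

def zadj : (k : ℕ) → ZV k → ZV k → Prop
  | _, .base a, .base b => a ≠ b
  | _, .root, .root => False
  | _, .root, .cl v => zsd _ v = true
  | _, .root, .cr v => zsd _ v = false
  | _, .cl v, .root => zsd _ v = true
  | _, .cr v, .root => zsd _ v = false
  | _, .cl v, .cl w => zadj _ v w
  | _, .cr v, .cr w => zadj _ v w
  | _, .cl _, .cr _ => False
  | _, .cr _, .cl _ => False

theorem zadj_root_left {k : ℕ} (v : ZV (k+1)) : zadj (k+1) .root v ↔ zsd (k+1) v = true := by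
  cases v <;> simp [zadj, zsd]

theorem zadj_root_right {k : ℕ} (v : ZV (k+1)) : zadj (k+1) v .root ↔ zsd (k+1) v = true := by
  cases v <;> simp [zadj, zsd]

def zcol (A : OnlineAlg) (Γ : SimpleGraph ℕ) (i : ℕ) : ℕ :=
  A i (Γ.comap (fun j : Fin (i+1) => (j : ℕ)))

theorem zcol_congr (A : OnlineAlg) (Γ Γ' : SimpleGraph ℕ) (i : ℕ)
    (h : ∀ a b, a ≤ i → b ≤ i → (Γ.Adj a b ↔ Γ'.Adj a b)) : zcol A Γ i = zcol A Γ' i := by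
  unfold zcol
  congr 1
  ext a b
  simp only [SimpleGraph.comap_adj]
  exact h _ _ (by omega) (by omega)

theorem zcol_proper (A : OnlineAlg) (hA : IsProperAlg A) (Γ : SimpleGraph ℕ) (i j : ℕ)
    (h : Γ.Adj i j) : zcol A Γ i ≠ zcol A Γ j := by
  have := hA (max i j + 1) (Γ.comap (fun j => (j : ℕ))) ⟨i, by omega⟩ ⟨j, by omega⟩ h
  exact this

def zcs (A : OnlineAlg) (Γ : SimpleGraph ℕ) (N N' : ℕ) (τ : ℕ → Bool) (b : Bool) : Finset ℕ :=
  ((Finset.Ico N N').filter (fun i => τ i = b)).image (zcol A Γ)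

theorem mem_zcs {A : OnlineAlg} {Γ : SimpleGraph ℕ} {N N' : ℕ} {τ : ℕ → Bool} {b : Bool} {c : ℕ} :
    c ∈ zcs A Γ N N' τ b ↔ ∃ i, N ≤ i ∧ i < N' ∧ τ i = b ∧ zcol A Γ i = c := by
  simp [zcs, and_assoc]

def ZEmb (k N N' : ℕ) (Γ : SimpleGraph ℕ) (τ : ℕ → Bool) : Prop :=
  ∃ φ : ℕ → ZV k, (∀ i, N ≤ i → i < N' → zsd k (φ i) = τ i) ∧
    ∀ i j, N ≤ i → i < N' → N ≤ j → j < N' →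
      (φ i = φ j → i = j) ∧ (Γ.Adj i j ↔ zadj k (φ i) (φ j))

theorem ZEmb.congr {k N N' : ℕ} {Γ Γ' : SimpleGraph ℕ} {τ τ' : ℕ → Bool}
    (h : ZEmb k N N' Γ τ) (h1 : ∀ i, N ≤ i → i < N' → τ i = τ' i)
    (h2 : ∀ i j, N ≤ i → i < N' → N ≤ j → j < N' → (Γ.Adj i j ↔ Γ'.Adj i j)) :
    ZEmb k N N' Γ' τ' := by
  obtain ⟨φ, ha, hb⟩ := h
  refine ⟨φ, fun i hi hi' => (ha i hi hi').trans (h1 i hi hi'), fun i j hi hi' hj hj' => ?_⟩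
  rw [← h2 i j hi hi' hj hj']
  exact hb i j hi hi' hj hj'

/-- outcome of the forcing strategy -/
def ZOut (A : OnlineAlg) (k N N' : ℕ) (Γ : SimpleGraph ℕ) : Prop :=
  ∃ τ : ℕ → Bool, ZEmb k N N' Γ τ ∧
    ((k + 2 ≤ (zcs A Γ N N' τ false).card ∧ k + 1 ≤ (zcs A Γ N N' τ true).card) ∨
     (ZEmb k N N' Γ (fun i => !(τ i)) ∧
      k + 1 ≤ (zcs A Γ N N' τ false).card ∧ k + 1 ≤ (zcs A Γ N N' τ true).card ∧
      k + 2 ≤ (zcs A Γ N N' τ false ∪ zcs A Γ N N' τ true).card))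

theorem zcs_not (A : OnlineAlg) (Γ : SimpleGraph ℕ) (N N' : ℕ) (τ : ℕ → Bool) (b : Bool) :
    zcs A Γ N N' (fun i => !(τ i)) b = zcs A Γ N N' τ (!b) := by
  ext c; rw [mem_zcs, mem_zcs]
  constructor <;> rintro ⟨i, h1, h2, h3, h4⟩ <;> refine ⟨i, h1, h2, ?_, h4⟩ <;>
    cases b <;> simp_all

theorem zcs_congr (A : OnlineAlg) (Γ Γ' : SimpleGraph ℕ) (N N' : ℕ) (τ τ' : ℕ → Bool) (b : Bool)
    (h1 : ∀ i, N ≤ i → i < N' → τ i = τ' i)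
    (h2 : ∀ i j, i < N' → j < N' → (Γ.Adj i j ↔ Γ'.Adj i j)) :
    zcs A Γ N N' τ b = zcs A Γ' N N' τ' b := by
  ext c; rw [mem_zcs, mem_zcs]
  have key : ∀ i, i < N' → zcol A Γ i = zcol A Γ' i := fun i hi =>
    zcol_congr A Γ Γ' i (fun a b ha hb => h2 a b (by omega) (by omega))
  constructor
  · rintro ⟨i, a1, a2, a3, a4⟩
    exact ⟨i, a1, a2, by rw [← h1 i a1 a2, a3], by rw [← key i a2, a4]⟩
  · rintro ⟨i, a1, a2, a3, a4⟩
    exact ⟨i, a1, a2, by rw [h1 i a1 a2, a3], by rw [key i a2, a4]⟩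

/-- the labelling of the union of two copies -/
def zJ (N1 : ℕ) (τ1 τ2 : ℕ → Bool) (i : ℕ) : Bool := if i < N1 then τ1 i else !(τ2 i)

theorem zemb_join {k N N1 N2 : ℕ} {Γ : SimpleGraph ℕ} {τ1 τ2 : ℕ → Bool}
    (h1 : ZEmb k N N1 Γ τ1) (h2 : ZEmb k N1 N2 Γ τ2)
    (hno : ∀ i j, i < N1 → N1 ≤ j → j < N2 → ¬ Γ.Adj i j) :
    ZEmb (k+1) N N2 Γ (zJ N1 τ1 τ2) ∧ ZEmb (k+1) N N2 Γ (fun i => !(zJ N1 τ1 τ2 i)) := by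
  obtain ⟨φ1, a1, b1⟩ := h1
  obtain ⟨φ2, a2, b2⟩ := h2
  constructor
  · refine ⟨fun i => if i < N1 then ZV.cl (φ1 i) else ZV.cr (φ2 i), ?_, ?_⟩
    · intro i hi hi'
      by_cases h : i < N1
      · simp [h, zJ, zsd, a1 i hi h]
      · simp [h, zJ, zsd, a2 i (by omega) hi']
    · intro i j hi hi' hj hj'
      by_cases h : i < N1 <;> by_cases g : j < N1
      · have := b1 i j hi h hj g
        refine ⟨fun e => this.1 (by simpa [h, g] using e), ?_⟩
        simpa [h, g, zadj] using this.2
      · simp [h, g, zadj, hno i j h (by omega) hj']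
      · simp only [h, g, zadj]
        refine ⟨by simp, ?_⟩
        rw [Γ.adj_comm]
        simp [zadj, hno j i g (by omega) hi']
      · have := b2 i j (by omega) hi' (by omega) hj'
        refine ⟨fun e => this.1 (by simpa [h, g] using e), ?_⟩
        simpa [h, g, zadj] using this.2
  · refine ⟨fun i => if i < N1 then ZV.cr (φ1 i) else ZV.cl (φ2 i), ?_, ?_⟩
    · intro i hi hi'
      by_cases h : i < N1
      · simp [h, zJ, zsd, a1 i hi h]
      · simp [h, zJ, zsd, a2 i (by omega) hi']
    · intro i j hi hi' hj hj'
      by_cases h : i < N1 <;> by_cases g : j < N1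
      · have := b1 i j hi h hj g
        refine ⟨fun e => this.1 (by simpa [h, g] using e), ?_⟩
        simpa [h, g, zadj] using this.2
      · simp [h, g, zadj, hno i j h (by omega) hj']
      · simp only [h, g, zadj]
        refine ⟨by simp, ?_⟩
        rw [Γ.adj_comm]
        simp [zadj, hno j i g (by omega) hi']
      · have := b2 i j (by omega) hi' (by omega) hj'
        refine ⟨fun e => this.1 (by simpa [h, g] using e), ?_⟩
        simpa [h, g, zadj] using this.2

/-- adding a root to the union of two copies -/
def zroot (N N2 : ℕ) (Γ : SimpleGraph ℕ) (J : ℕ → Bool) : SimpleGraph ℕ where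
  Adj a b := (a < N2 ∧ b < N2 ∧ Γ.Adj a b) ∨ (a = N2 ∧ N ≤ b ∧ b < N2 ∧ J b = true) ∨
    (b = N2 ∧ N ≤ a ∧ a < N2 ∧ J a = true)
  symm := ⟨by
    rintro a b (⟨h1, h2, h3⟩ | h | h)
    · exact Or.inl ⟨h2, h1, h3.symm⟩
    · exact Or.inr (Or.inr h)
    · exact Or.inr (Or.inl h)⟩
  loopless := ⟨by
    rintro a (⟨_, _, h⟩ | ⟨h1, _, h2, _⟩ | ⟨h1, _, h2, _⟩)
    · exact Γ.irrefl h
    · omega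
    · omega⟩

theorem zroot_adj_old {N N2 : ℕ} {Γ : SimpleGraph ℕ} {J : ℕ → Bool} {i j : ℕ}
    (hi : i < N2) (hj : j < N2) : (zroot N N2 Γ J).Adj i j ↔ Γ.Adj i j := by
  have h1 : i ≠ N2 := by omega
  have h2 : j ≠ N2 := by omega
  simp [zroot, hi, hj, h1, h2]

theorem zroot_adj_new {N N2 : ℕ} {Γ : SimpleGraph ℕ} {J : ℕ → Bool} {j : ℕ} :
    (zroot N N2 Γ J).Adj N2 j ↔ N ≤ j ∧ j < N2 ∧ J j = true := by
  simp only [zroot]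
  constructor
  · rintro (⟨h1, h2, h3⟩ | h | ⟨h0, h1, h2, h3⟩)
    · omega
    · exact h.2
    · omega
  · intro h; exact Or.inr (Or.inl (by simpa using h))

theorem zemb_root {k N N1 N2 : ℕ} {Γ : SimpleGraph ℕ} {τ1 τ2 : ℕ → Bool}
    (hN : N ≤ N2)
    (h1 : ZEmb k N N1 Γ τ1) (h2 : ZEmb k N1 N2 Γ τ2)
    (hno : ∀ i j, i < N1 → N1 ≤ j → j < N2 → ¬ Γ.Adj i j) :
    ZEmb (k+1) N (N2+1) (zroot N N2 Γ (zJ N1 τ1 τ2))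
      (fun i => if i < N2 then zJ N1 τ1 τ2 i else false) := by
  obtain ⟨φ1, a1, b1⟩ := h1
  obtain ⟨φ2, a2, b2⟩ := h2
  set J := zJ N1 τ1 τ2 with hJ
  let φ : ℕ → ZV (k+1) := fun i => if i < N1 then ZV.cl (φ1 i) else ZV.cr (φ2 i)
  have hφ : ∀ i, N ≤ i → i < N2 → zsd (k+1) (φ i) = J i := by
      intro i hi hi'
      by_cases h : i < N1
      · simp [h, zsd, a1 i hi h, φ, hJ, zJ]
      · simp [h, zsd, a2 i (by omega) hi', φ, hJ, zJ]
  have hφ2 : ∀ i j, N ≤ i → i < N2 → N ≤ j → j < N2 →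
      (φ i = φ j → i = j) ∧ (Γ.Adj i j ↔ zadj (k+1) (φ i) (φ j)) := by
      intro i j hi hi' hj hj'
      by_cases h : i < N1 <;> by_cases g : j < N1
      · have := b1 i j hi h hj g
        refine ⟨fun e => this.1 (by simpa [h, g, φ] using e), ?_⟩
        simpa [h, g, zadj, φ] using this.2
      · simp [h, g, zadj, hno i j h (by omega) hj', φ]
      · simp only [h, g, zadj, φ]
        refine ⟨by simp, ?_⟩
        rw [Γ.adj_comm]
        simp [zadj, hno j i g (by omega) hi']
      · have := b2 i j (by omega) hi' (by omega) hj'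
        refine ⟨fun e => this.1 (by simpa [h, g, φ] using e), ?_⟩
        simpa [h, g, zadj, φ] using this.2
  have hφ3 : ∀ i, φ i ≠ ZV.root := by
    intro i
    by_cases h : i < N1 <;> simp [φ, h]
  have hφ4 : ∀ i, ZV.root ≠ φ i := fun i => (hφ3 i).symm
  refine ⟨fun i => if i < N2 then φ i else ZV.root, ?_, ?_⟩
  · intro i hi hi'
    by_cases h : i < N2
    · simp [h, hφ i hi h]
    · simp [h, zsd]
  · intro i j hi hi' hj hj'
    by_cases h : i < N2 <;> by_cases g : j < N2
    · have := hφ2 i j hi h hj g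
      rw [zroot_adj_old h g]
      refine ⟨fun e => this.1 (by simpa [h, g] using e), ?_⟩
      simpa [h, g] using this.2
    · have e : j = N2 := by omega
      subst e
      rw [SimpleGraph.adj_comm, zroot_adj_new]
      simp [h, zadj_root_right, hφ i hi h, hi, hφ3]
    · have e : i = N2 := by omega
      subst e
      rw [zroot_adj_new]
      simp [g, zadj_root_left, hφ j hj g, hj, hφ4]
    · have e : i = N2 := by omega
      have e' : j = N2 := by omega
      subst e; subst e'
      simp [zadj]

theorem zcs_join (A : OnlineAlg) (Γ : SimpleGraph ℕ) {N N1 N2 : ℕ} (h1 : N ≤ N1) (h2 : N1 ≤ N2)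
    (τ1 τ2 : ℕ → Bool) (b : Bool) :
    zcs A Γ N N2 (zJ N1 τ1 τ2) b = zcs A Γ N N1 τ1 b ∪ zcs A Γ N1 N2 τ2 (!b) := by
  ext c
  rw [Finset.mem_union, mem_zcs, mem_zcs, mem_zcs]
  constructor
  · rintro ⟨i, a1, a2, a3, a4⟩
    by_cases h : i < N1
    · left; exact ⟨i, a1, h, by simpa [zJ, h] using a3, a4⟩
    · right; refine ⟨i, by omega, a2, ?_, a4⟩
      simp only [zJ, h, if_false] at a3
      rw [← a3]; simp
  · rintro (⟨i, a1, a2, a3, a4⟩ | ⟨i, a1, a2, a3, a4⟩)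
    · exact ⟨i, a1, by omega, by simpa [zJ, a2] using a3, a4⟩
    · exact ⟨i, by omega, a2, by simp [zJ, show ¬ i < N1 by omega, a3], a4⟩

/-- combining two copies -/
theorem zout_merge (A : OnlineAlg) (hA : IsProperAlg A) {k N N1 N2 : ℕ} {Γ : SimpleGraph ℕ}
    {τ1 τ2 : ℕ → Bool} (hN1 : N ≤ N1) (hN2 : N1 ≤ N2)
    (h1 : ZEmb k N N1 Γ τ1) (h2 : ZEmb k N1 N2 Γ τ2)
    (hno : ∀ i j, i < N1 → N1 ≤ j → j < N2 → ¬ Γ.Adj i j)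
    (hP : k + 2 ≤ (zcs A Γ N N1 τ1 false ∪ zcs A Γ N1 N2 τ2 true).card)
    (hQ : k + 2 ≤ (zcs A Γ N N1 τ1 true ∪ zcs A Γ N1 N2 τ2 false).card) :
    ∃ N' Γ', N2 ≤ N' ∧ (∀ i j, i < N2 → j < N2 → (Γ'.Adj i j ↔ Γ.Adj i j)) ∧
      (∀ i j, i < N → N2 ≤ j → ¬ Γ'.Adj i j) ∧ ZOut A (k+1) N N' Γ' := by
  set J := zJ N1 τ1 τ2 with hJ
  have e1 := zcs_join A Γ hN1 hN2 τ1 τ2 false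
  have e2 := zcs_join A Γ hN1 hN2 τ1 τ2 true
  simp only [Bool.not_false, Bool.not_true] at e1 e2
  rw [← e1] at hP
  rw [← e2] at hQ
  rw [← hJ] at hP hQ
  have hsame : ∀ i j, i < N2 → j < N2 → ((zroot N N2 Γ J).Adj i j ↔ Γ.Adj i j) :=
    fun i j hi hj => zroot_adj_old hi hj
  have hnoo : ∀ i j, i < N → N2 ≤ j → ¬ (zroot N N2 Γ J).Adj i j := by
    intro i j hi hj
    rintro (⟨_, h, _⟩ | ⟨h, _⟩ | ⟨_, h, _⟩) <;> omega
  by_cases hU : k + 3 ≤ (zcs A Γ N N2 J false ∪ zcs A Γ N N2 J true).card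
  · refine ⟨N2, zroot N N2 Γ J, le_refl _, hsame, hnoo, J, ?_, Or.inr ⟨?_, ?_⟩⟩
    · exact (zemb_join h1 h2 hno).1.congr (fun _ _ _ => rfl)
        (fun i j _ hi _ hj => (hsame i j hi hj).symm)
    · exact (zemb_join h1 h2 hno).2.congr (fun _ _ _ => rfl)
        (fun i j _ hi _ hj => (hsame i j hi hj).symm)
    · rw [zcs_congr A (zroot N N2 Γ J) Γ N N2 J J false (fun _ _ _ => rfl) hsame,
        zcs_congr A (zroot N N2 Γ J) Γ N N2 J J true (fun _ _ _ => rfl) hsame]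
      exact ⟨by omega, by omega, by omega⟩
  · have hU' : (zcs A Γ N N2 J false ∪ zcs A Γ N N2 J true).card ≤ k + 2 := by omega
    have p1 : zcs A Γ N N2 J false = zcs A Γ N N2 J false ∪ zcs A Γ N N2 J true :=
      Finset.eq_of_subset_of_card_le Finset.subset_union_left (by omega)
    have p2 : zcs A Γ N N2 J true = zcs A Γ N N2 J false ∪ zcs A Γ N N2 J true :=
      Finset.eq_of_subset_of_card_le Finset.subset_union_right (by omega)
    have hPQ := p1.trans p2.symm
    set Γ' := zroot N N2 Γ J with hΓ'
    set τ' : ℕ → Bool := fun i => if i < N2 then J i else false with hτ'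
    have hcolold : ∀ i, i < N2 → zcol A Γ' i = zcol A Γ i := fun i hi =>
      zcol_congr A _ _ i (fun a b ha hb => hsame a b (by omega) (by omega))
    have hsub : ∀ b, zcs A Γ N N2 J b ⊆ zcs A Γ' N (N2+1) τ' b := by
      intro b c hc
      rw [mem_zcs] at hc ⊢
      obtain ⟨i, a1, a2, a3, a4⟩ := hc
      exact ⟨i, a1, by omega, by simp [hτ', a2, a3], by rw [hcolold i a2, a4]⟩
    have hnew : zcol A Γ' N2 ∉ zcs A Γ N N2 J true := by
      intro hc
      rw [mem_zcs] at hc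
      obtain ⟨i, a1, a2, a3, a4⟩ := hc
      rw [← hcolold i a2] at a4
      exact zcol_proper A hA Γ' N2 i (zroot_adj_new.2 ⟨a1, a2, a3⟩) a4.symm
    refine ⟨N2 + 1, Γ', by omega, hsame, hnoo, τ', ?_, Or.inl ⟨?_, ?_⟩⟩
    · exact zemb_root (by omega) h1 h2 hno
    · have : insert (zcol A Γ' N2) (zcs A Γ N N2 J false) ⊆ zcs A Γ' N (N2+1) τ' false := by
        intro c hc
        rw [Finset.mem_insert] at hc
        rcases hc with rfl | hc
        · rw [mem_zcs]; exact ⟨N2, by omega, by omega, by simp [hτ'], rfl⟩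
        · exact hsub _ hc
      have h3 := Finset.card_le_card this
      rw [Finset.card_insert_of_notMem (by rw [hPQ]; exact hnew)] at h3
      omega
    · have h3 := Finset.card_le_card (hsub true)
      omega

theorem zcomb1 {κ : ℕ} {B X Y : Finset ℕ} (hB : κ ≤ B.card)
    (hXY : κ + 1 ≤ (X ∪ Y).card) : κ + 1 ≤ (B ∪ X).card ∨ κ + 1 ≤ (B ∪ Y).card := by
  by_contra! hcon
  have h1 : B = B ∪ X := Finset.eq_of_subset_of_card_le Finset.subset_union_left (by omega)
  have h2 : B = B ∪ Y := Finset.eq_of_subset_of_card_le Finset.subset_union_left (by omega)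
  have h3 : X ∪ Y ⊆ B := by
    apply Finset.union_subset
    · rw [h1]; exact Finset.subset_union_right
    · rw [h2]; exact Finset.subset_union_right
  have := Finset.card_le_card h3
  rw [← h1] at hcon
  omega

theorem zcomb2 {κ : ℕ} {X1 Y1 X2 Y2 : Finset ℕ} (hX1 : κ ≤ X1.card) (hY1 : κ ≤ Y1.card)
    (hX2 : κ ≤ X2.card) (hY2 : κ ≤ Y2.card)
    (h1 : κ + 1 ≤ (X1 ∪ Y1).card) (h2 : κ + 1 ≤ (X2 ∪ Y2).card) :
    (κ + 1 ≤ (X1 ∪ Y2).card ∧ κ + 1 ≤ (Y1 ∪ X2).card) ∨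
    (κ + 1 ≤ (X1 ∪ X2).card ∧ κ + 1 ≤ (Y1 ∪ Y2).card) := by
  have a := zcomb1 hX1 h2
  have b := zcomb1 hY1 h2
  have c := zcomb1 hX2 h1
  have d := zcomb1 hY2 h1
  rw [Finset.union_comm X2, Finset.union_comm X2] at c
  rw [Finset.union_comm Y2, Finset.union_comm Y2] at d
  tauto

theorem zforce (A : OnlineAlg) (hA : IsProperAlg A) (k : ℕ) : ∀ (N : ℕ) (Γ : SimpleGraph ℕ),
    ∃ N' Γ', N ≤ N' ∧ (∀ i j, i < N → j < N → (Γ'.Adj i j ↔ Γ.Adj i j)) ∧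
      (∀ i j, i < N → N ≤ j → j < N' → ¬ Γ'.Adj i j) ∧ ZOut A k N N' Γ' := by
  induction k with
  | zero =>
    intro N Γ
    let Γ' : SimpleGraph ℕ :=
      { Adj := fun a b => (a < N ∧ b < N ∧ Γ.Adj a b) ∨ (a = N ∧ b = N+1) ∨ (a = N+1 ∧ b = N)
        symm := ⟨by
          rintro a b (⟨h1, h2, h3⟩ | h | h)
          · exact Or.inl ⟨h2, h1, h3.symm⟩
          · exact Or.inr (Or.inr ⟨h.2, h.1⟩)
          · exact Or.inr (Or.inl ⟨h.2, h.1⟩)⟩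
        loopless := ⟨by
          rintro a (⟨_, _, h⟩ | ⟨h1, _⟩ | ⟨h1, _⟩)
          · exact Γ.irrefl h
          · omega
          · omega⟩ }
    have hadj : Γ'.Adj N (N+1) := Or.inr (Or.inl ⟨rfl, rfl⟩)
    have emb : ∀ c : Bool, ZEmb 0 N (N+2) Γ' (fun i => if i = N then c else !c) := by
      intro c
      refine ⟨fun i => ZV.base (if i = N then c else !c), fun i _ _ => rfl, ?_⟩
      intro i j hi hi' hj hj'
      have e1 : i = N ∨ i = N + 1 := by omega
      have e2 : j = N ∨ j = N + 1 := by omega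
      have hadj' := hadj.symm
      rcases e1 with rfl | rfl <;> rcases e2 with rfl | rfl
      · simp [zadj]
      · cases c <;> simp [zadj, hadj]
      · cases c <;> simp [zadj, hadj']
      · simp [zadj]
    refine ⟨N + 2, Γ', by omega, ?_, ?_, (fun i => if i = N then false else !false), emb false,
      Or.inr ⟨?_, ?_⟩⟩
    · intro i j hi hj
      constructor
      · rintro (⟨_, _, h⟩ | ⟨h, _⟩ | ⟨h, _⟩)
        · exact h
        · omega
        · omega
      · intro h; exact Or.inl ⟨hi, hj, h⟩
    · rintro i j hi hj hj' (⟨_, h, _⟩ | ⟨h, _⟩ | ⟨h, _⟩) <;> omega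
    · refine (emb true).congr ?_ (fun _ _ _ _ _ _ => Iff.rfl)
      intro i _ _
      by_cases h : i = N <;> simp [h]
    · have m1 : zcol A Γ' N ∈ zcs A Γ' N (N+2) (fun i => if i = N then false else !false) false :=
        mem_zcs.2 ⟨N, by omega, by omega, by simp, rfl⟩
      have m2 : zcol A Γ' (N+1) ∈ zcs A Γ' N (N+2) (fun i => if i = N then false else !false) true :=
        mem_zcs.2 ⟨N+1, by omega, by omega, by simp, rfl⟩
      have hne := zcol_proper A hA Γ' _ _ hadj
      refine ⟨Finset.card_pos.2 ⟨_, m1⟩, Finset.card_pos.2 ⟨_, m2⟩, ?_⟩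
      have : ({zcol A Γ' N, zcol A Γ' (N+1)} : Finset ℕ) ⊆
        zcs A Γ' N (N+2) (fun i => if i = N then false else !false) false ∪
        zcs A Γ' N (N+2) (fun i => if i = N then false else !false) true := by
        intro c hc
        simp only [Finset.mem_insert, Finset.mem_singleton] at hc
        rcases hc with rfl | rfl
        · exact Finset.mem_union_left _ m1
        · exact Finset.mem_union_right _ m2
      have h3 := Finset.card_le_card this
      rw [Finset.card_pair hne] at h3
      omega
  | succ k ih =>
    intro N Γ
    obtain ⟨N1, Γ1, l1, s1, n1, τ1, em1, o1⟩ := ih N Γ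
    obtain ⟨N2, Γ2, l2, s2, n2, τ2, em2, o2⟩ := ih N1 Γ1
    have em1' : ∀ τ, ZEmb k N N1 Γ1 τ → ZEmb k N N1 Γ2 τ := fun τ h =>
      h.congr (fun _ _ _ => rfl) (fun i j _ hi _ hj => (s2 i j hi hj).symm)
    have cs1 : ∀ b, zcs A Γ1 N N1 τ1 b = zcs A Γ2 N N1 τ1 b := fun b =>
      zcs_congr A Γ1 Γ2 N N1 τ1 τ1 b (fun _ _ _ => rfl) (fun i j hi hj => (s2 i j hi hj).symm)
    rw [cs1, cs1] at o1
    have main : ∃ σ1 σ2, ZEmb k N N1 Γ2 σ1 ∧ ZEmb k N1 N2 Γ2 σ2 ∧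
        k + 2 ≤ (zcs A Γ2 N N1 σ1 false ∪ zcs A Γ2 N1 N2 σ2 true).card ∧
        k + 2 ≤ (zcs A Γ2 N N1 σ1 true ∪ zcs A Γ2 N1 N2 σ2 false).card := by
      rcases o1 with ⟨a1, a2⟩ | ⟨a0, a1, a2, a3⟩
      · rcases o2 with ⟨b1, b2⟩ | ⟨b0, b1, b2, b3⟩
        · exact ⟨τ1, τ2, em1' _ em1, em2,
            a1.trans (Finset.card_le_card Finset.subset_union_left),
            b1.trans (Finset.card_le_card Finset.subset_union_right)⟩
        · rcases zcomb1 a2 b3 with h | h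
          · exact ⟨τ1, τ2, em1' _ em1, em2,
              a1.trans (Finset.card_le_card Finset.subset_union_left), h⟩
          · refine ⟨τ1, _, em1' _ em1, b0,
              a1.trans (Finset.card_le_card Finset.subset_union_left), ?_⟩
            rw [zcs_not]; exact h
      · rcases o2 with ⟨b1, b2⟩ | ⟨b0, b1, b2, b3⟩
        · rcases zcomb1 b2 a3 with h | h
          · refine ⟨τ1, τ2, em1' _ em1, em2, ?_,
              b1.trans (Finset.card_le_card Finset.subset_union_right)⟩
            rw [Finset.union_comm]; exact h
          · refine ⟨_, τ2, em1' _ a0, em2, ?_,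
              b1.trans (Finset.card_le_card Finset.subset_union_right)⟩
            rw [zcs_not, Finset.union_comm]; exact h
        · rcases zcomb2 a1 a2 b1 b2 a3 b3 with h | h
          · exact ⟨τ1, τ2, em1' _ em1, em2, h.1, h.2⟩
          · refine ⟨τ1, _, em1' _ em1, b0, ?_, ?_⟩
            · rw [zcs_not]; exact h.1
            · rw [zcs_not]; exact h.2
    obtain ⟨σ1, σ2, e1, e2, hP, hQ⟩ := main
    have hno : ∀ i j, i < N1 → N1 ≤ j → j < N2 → ¬ Γ2.Adj i j := n2
    obtain ⟨N', Γ', l', s', n', out⟩ := zout_merge A hA l1 l2 e1 e2 hno hP hQ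
    refine ⟨N', Γ', by omega, ?_, ?_, out⟩
    · intro i j hi hj
      rw [s' i j (by omega) (by omega), s2 i j (by omega) (by omega), s1 i j hi hj]
    · intro i j hi hj hj'
      by_cases h : j < N2
      · rw [s' i j (by omega) h]
        by_cases h' : j < N1
        · rw [s2 i j (by omega) h']; exact n1 i j hi hj h'
        · exact n2 i j (by omega) (by omega) h
      · exact n' i j hi (by omega)

theorem zforce_chrom {V : Type} [Fintype V] (G : SimpleGraph V) (k : ℕ) (f : ZV k → V)
    (hf : Function.Injective f) (hadj : ∀ a b, G.Adj (f a) (f b) ↔ zadj k a b)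
    (A : OnlineAlg) (hA : IsProperAlg A) (m : ℕ)
    (hm : ∀ (n : ℕ) (π : Fin n ≃ V), numColors A (G.comap π) ≤ m) : k + 2 ≤ m := by
  classical
  obtain ⟨N, Γ, -, -, -, τ, ⟨φ, -, hφ⟩, out⟩ := zforce A hA k 0 ⊥
  have hcard : k + 2 ≤ ((Finset.range N).image (zcol A Γ)).card := by
    have : zcs A Γ 0 N τ false ∪ zcs A Γ 0 N τ true ⊆ (Finset.range N).image (zcol A Γ) := by
      intro c hc
      rw [Finset.mem_union, mem_zcs, mem_zcs] at hc
      rw [Finset.mem_image]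
      rcases hc with ⟨i, _, h2, _, h4⟩ | ⟨i, _, h2, _, h4⟩ <;>
      exact ⟨i, Finset.mem_range.2 h2, h4⟩
    refine le_trans ?_ (Finset.card_le_card this)
    rcases out with ⟨a, _⟩ | ⟨_, _, _, a⟩
    · exact a.trans (Finset.card_le_card Finset.subset_union_left)
    · exact a
  let e : Fin N ↪ V := ⟨fun i => f (φ i), fun i j h => Fin.ext
    ((hφ i j (Nat.zero_le _) i.2 (Nat.zero_le _) j.2).1 (hf h))⟩
  have hN : N ≤ Fintype.card V := by simpa using Fintype.card_le_of_embedding e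
  obtain ⟨π, hπ⟩ : ∃ π : Fin (Fintype.card V) ≃ V, ∀ i : Fin N, π (Fin.castLE hN i) = e i := by
    let e0 : Fin (Fintype.card V) ≃ V := (Fintype.equivFin V).symm
    let g : Fin N → V := fun i => e0 (Fin.castLE hN i)
    have hg : Function.Injective g := fun i j h => Fin.castLE_injective hN (e0.injective h)
    let p : V → Prop := fun v => v ∈ Set.range g
    let q : V → Prop := fun v => v ∈ Set.range e
    let ee : {v // p v} ≃ {v // q v} :=
      (Equiv.ofInjective g hg).symm.trans (Equiv.ofInjective e e.injective)
    refine ⟨e0.trans ee.extendSubtype, fun i => ?_⟩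
    have : ee.extendSubtype (g i) = ee ⟨g i, ⟨i, rfl⟩⟩ :=
      Equiv.extendSubtype_apply_of_mem ee (g i) ⟨i, rfl⟩
    show ee.extendSubtype (g i) = e i
    rw [this]
    simp only [ee, Equiv.trans_apply]
    have h2 : (Equiv.ofInjective g hg).symm ⟨g i, ⟨i, rfl⟩⟩ = i := by
      rw [Equiv.symm_apply_eq]; rfl
    rw [h2]; rfl
  refine le_trans hcard (le_trans ?_ (hm _ π))
  unfold numColors
  apply Finset.card_le_card
  intro c hc
  rw [Finset.mem_image] at hc ⊢
  obtain ⟨i, hi, rfl⟩ := hc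
  rw [Finset.mem_range] at hi
  refine ⟨⟨i, by omega⟩, Finset.mem_univ _, ?_⟩
  unfold runColor zcol
  simp only
  congr 1
  ext a b
  simp only [SimpleGraph.comap_adj]
  have ha : (a : ℕ) < N := by omega
  have hb : (b : ℕ) < N := by omega
  have h1 := hπ ⟨a, ha⟩
  have h2 := hπ ⟨b, hb⟩
  have h3 := (hφ a b (Nat.zero_le _) ha (Nat.zero_le _) hb).2
  rw [h3, ← hadj]
  have h1' : π (Fin.castLE (by omega) a) = f (φ a) := h1
  have h2' : π (Fin.castLE (by omega) b) = f (φ b) := h2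
  rw [h1', h2']

/-! ### Part II: facts about Algorithm 1 -/

section reach
variable {H : SimpleGraph ℕ}

theorem ri_refl {S : Set ℕ} {x : ℕ} (hx : x ∈ S) : ReachIn H S x x := ⟨hx, hx, SimpleGraph.Reachable.refl _⟩

theorem ri_symm {S : Set ℕ} {x y : ℕ} (h : ReachIn H S x y) : ReachIn H S y x := by
  obtain ⟨hx, hy, h⟩ := h
  exact ⟨hy, hx, h.symm⟩

theorem ri_trans {S : Set ℕ} {x y z : ℕ} (h : ReachIn H S x y) (h' : ReachIn H S y z) :
    ReachIn H S x z := by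
  obtain ⟨hx, hy, h⟩ := h
  obtain ⟨hy', hz, h'⟩ := h'
  exact ⟨hx, hz, h.trans h'⟩

theorem ri_adj {S : Set ℕ} {x y : ℕ} (hx : x ∈ S) (hy : y ∈ S) (h : H.Adj x y) :
    ReachIn H S x y :=
  ⟨hx, hy, SimpleGraph.Adj.reachable (by simpa using h)⟩

theorem ri_step {S : Set ℕ} {x y z : ℕ} (h : ReachIn H S x y) (ha : H.Adj y z) (hz : z ∈ S) :
    ReachIn H S x z := ri_trans h (ri_adj h.2.1 hz ha)

theorem ri_ind {S : Set ℕ} {x y : ℕ} (h : ReachIn H S x y) (P : ℕ → Prop) (hx : P x)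
    (hs : ∀ u v, ReachIn H S x u → P u → H.Adj u v → v ∈ S → P v) : P y := by
  obtain ⟨hxS, hy, ⟨w⟩⟩ := h
  have key : ∀ (a b : S) (w : (H.induce S).Walk a b), ReachIn H S x a → P a → P b := by
    intro a b w
    induction w with
    | nil => intro _ h; exact h
    | @cons u v w hadj p ih =>
      intro h1 h2
      have hadj' : H.Adj u v := by simpa using hadj
      exact ih (ri_step h1 hadj' v.2) (hs u v h1 h2 hadj' v.2)
  exact key _ _ w (ri_refl hxS) hx

theorem ri_mono {S T : Set ℕ} (hST : S ⊆ T) {x y : ℕ} (h : ReachIn H S x y) : ReachIn H T x y :=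
  ri_ind h (fun y => ReachIn H T x y) (ri_refl (hST h.1))
    (fun _ _ _ hu ha hv => ri_step hu ha (hST hv))

theorem ri_exit {S : Set ℕ} {x y : ℕ} (h : ReachIn H S x y) (P : ℕ → Prop) (hx : P x)
    (hy : ¬ P y) : ∃ u v, ReachIn H S x u ∧ ReachIn H S x v ∧ P u ∧ ¬ P v ∧ H.Adj u v := by
  by_contra hcon
  push Not at hcon
  refine hy (ri_ind h P hx fun u v h1 h2 h3 h4 => ?_)
  by_contra h5
  exact hcon u v h1 (ri_step h1 h3 h4) h2 h5 h3

theorem ri_insert {S : Set ℕ} {v w : ℕ} (h : ReachIn H (insert v S) v w) (hw : w ≠ v) :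
    ∃ p, H.Adj v p ∧ ReachIn H S p w := by
  have := ri_ind h (fun w => w = v ∨ ∃ p, H.Adj v p ∧ ReachIn H S p w) (Or.inl rfl) ?_
  · exact this.resolve_left hw
  · rintro a b _ h1 h2 h3
    by_cases hb : b = v
    · exact Or.inl hb
    have hbS : b ∈ S := h3.resolve_left hb
    rcases h1 with rfl | ⟨p, hp, hp'⟩
    · exact Or.inr ⟨b, h2, ri_refl hbS⟩
    · exact Or.inr ⟨p, hp, ri_step hp' h2 hbS⟩

theorem ri_remove {S : Set ℕ} {t x y : ℕ} (h : ReachIn H (insert t S) x y)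
    (ht : ¬ ReachIn H (insert t S) x t) : ReachIn H S x y := by
  have hx : x ∈ S := by
    rcases h.1 with e | e
    · subst e; exact absurd (ri_refl h.1) ht
    · exact e
  refine ri_ind h (fun y => ReachIn H S x y) (ri_refl hx) ?_
  intro u v h1 h2 h3 h4
  refine ri_step h2 h3 ?_
  rcases h4 with e | e
  · subst e; exact absurd (ri_step h1 h3 (Set.mem_insert _ _)) ht
  · exact e

theorem even_iff {σ : ℕ → Bool} (hσ : ∀ x y, H.Adj x y → σ x ≠ σ y) {S : Set ℕ} {x y : ℕ} :
    EvenReachIn H S x y ↔ ReachIn H S x y ∧ σ x = σ y := by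
  have key : ∀ (a b : S) (w : (H.induce S).Walk a b), Even w.length ↔ σ a = σ b := by
    intro a b w
    induction w with
    | nil => simp
    | @cons u v w hadj p ih =>
      have hadj' : H.Adj u v := by simpa using hadj
      have := hσ _ _ hadj'
      rw [SimpleGraph.Walk.length_cons, Nat.even_add_one, ih]
      cases h1 : σ u <;> cases h2 : σ v <;> cases h3 : σ w <;> simp_all
  constructor
  · rintro ⟨hx, hy, p, hp⟩
    exact ⟨⟨hx, hy, ⟨p⟩⟩, (key _ _ p).1 hp⟩
  · rintro ⟨⟨hx, hy, ⟨p⟩⟩, h⟩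
    exact ⟨hx, hy, p, (key _ _ p).2 h⟩

end reach

/-- vertices presented before `t` with index at most `i` -/
def Sx (c : ℕ → PalColor) (t i : ℕ) : Set ℕ := {w | w < t ∧ (c w).index ≤ i}

theorem Sx_mono {c : ℕ → PalColor} {t t' i i' : ℕ} (h : t ≤ t') (h' : i ≤ i') :
    Sx c t i ⊆ Sx c t' i' := fun _ hw => ⟨hw.1.trans_le h, hw.2.trans h'⟩

structure AlgF (H : SimpleGraph ℕ) (σ : ℕ → Bool) (c : ℕ → PalColor) : Prop where
  hσ : ∀ x y, H.Adj x y → σ x ≠ σ y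
  idx : ∀ v, 1 ≤ (c v).index
  mono : ∀ t i x y, 1 ≤ i → ReachIn H (Sx c t i) x y → c x = .a i → c y = .a i → σ x = σ y
  ch : ∀ v, 2 ≤ (c v).index → ∃ v1 v2 p1 p2, H.Adj v p1 ∧ H.Adj v p2 ∧
    ReachIn H (Sx c v ((c v).index - 1)) p1 v1 ∧ ReachIn H (Sx c v ((c v).index - 1)) p2 v2 ∧
    c v1 = .a ((c v).index - 1) ∧ c v2 = .a ((c v).index - 1) ∧ σ v1 = σ v ∧ σ v2 ≠ σ v
  ca : ∀ v m, c v = .a m →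
    (∃ z, c z = .c m ∧ ReachIn H (insert v (Sx c v m)) v z ∧ σ z ≠ σ v) ∨
    (∀ u p j, ReachIn H (insert v (Sx c v m)) v u → ReachIn H (insert v (Sx c v m)) v p →
      σ p ≠ σ v → u < v → c u = .a j → ((m : ℝ) - Real.sqrt (2 * m) + 2 ≤ (j : ℝ)) →
      ¬ (∀ x, ReachIn H (insert u (Sx c v (j-1))) u x → σ x ≠ σ p → H.Adj p x))
  cc : ∀ z m, c z = .c m → ∃ u p j, ReachIn H (insert z (Sx c z m)) z u ∧
      ReachIn H (insert z (Sx c z m)) z p ∧ σ p ≠ σ z ∧ u < z ∧ (c u).index = j ∧ 2 ≤ j ∧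
      ((m : ℝ) - Real.sqrt (2 * m) + 2 ≤ (j : ℝ)) ∧
      ∀ x, ReachIn H (insert u (Sx c z (j-1))) u x → σ x ≠ σ p → H.Adj p x
  cb : ∀ z m, c z = .b m → ∃ u, u < z ∧ c u = .a m

theorem aux_eq (H : SimpleGraph ℕ) (t w : ℕ) :
    algoColAux H t w = if w < t then algoCol H w else .a 0 := by
  induction t with
  | zero => simp [algoColAux]
  | succ t ih =>
    by_cases h : w = t
    · subst h; simp [algoCol]
    · simp only [algoColAux, h, if_false, ih]
      by_cases h' : w < t
      · simp [h', show w < t + 1 by omega]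
      · simp [h', show ¬ w < t + 1 by omega]

theorem algoCol_step (H : SimpleGraph ℕ) (t : ℕ) :
    algoCol H t = step H (algoColAux H t) t := by
  simp [algoCol, algoColAux]

theorem step_index (H : SimpleGraph ℕ) (col : ℕ → PalColor) (t : ℕ) :
    (step H col t).index = mIdx H col t := by
  unfold step
  simp only
  split_ifs <;> rfl

theorem algo_index (H : SimpleGraph ℕ) (t : ℕ) :
    (algoCol H t).index = mIdx H (algoColAux H t) t := by
  rw [algoCol_step, step_index]

theorem algo_index_pos (H : SimpleGraph ℕ) (t : ℕ) : 1 ≤ (algoCol H t).index := by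
  rw [algo_index]; unfold mIdx; omega

theorem dom_eq (H : SimpleGraph ℕ) (t i u : ℕ) :
    domSet (algoColAux H t) t i u = insert u (Sx (algoCol H) t i) := by
  ext w
  simp only [domSet, Set.mem_setOf_eq, Set.mem_insert_iff, Sx]
  have := algo_index_pos H w
  constructor
  · rintro (⟨h1, h2, h3⟩ | h)
    · rw [aux_eq, if_pos h1] at h3; exact Or.inr ⟨h1, h3⟩
    · exact Or.inl h
  · rintro (h | ⟨h1, h2⟩)
    · exact Or.inr h
    · left; rw [aux_eq, if_pos h1]; exact ⟨h1, this, h2⟩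

theorem aux_a {H : SimpleGraph ℕ} {t w i : ℕ} (hi : 1 ≤ i) (h : algoColAux H t w = .a i) :
    w < t ∧ algoCol H w = .a i := by
  rw [aux_eq] at h
  split_ifs at h with h1
  · exact ⟨h1, h⟩
  · simp at h; omega

section
variable {H : SimpleGraph ℕ} {σ : ℕ → Bool} (hσ : ∀ x y, H.Adj x y → σ x ≠ σ y)
include hσ

theorem mixed_iff (t i : ℕ) (hi : 1 ≤ i) : MixedA H (algoColAux H t) t i ↔
    ∃ x y, ReachIn H (insert t (Sx (algoCol H) t i)) t x ∧
      ReachIn H (insert t (Sx (algoCol H) t i)) t y ∧ x < t ∧ y < t ∧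
      algoCol H x = .a i ∧ algoCol H y = .a i ∧ σ x ≠ σ y := by
  unfold MixedA comp
  simp only [dom_eq, even_iff hσ, Set.mem_setOf_eq]
  constructor
  · rintro ⟨x, hx, y, hy, cx, cy, h⟩
    refine ⟨x, y, hx, hy, (aux_a hi cx).1, (aux_a hi cy).1, (aux_a hi cx).2, (aux_a hi cy).2, ?_⟩
    intro e
    exact h ⟨ri_trans (ri_symm hx) hy, e⟩
  · rintro ⟨x, y, hx, hy, lx, ly, cx, cy, h⟩
    refine ⟨x, hx, y, hy, ?_, ?_, fun e => h e.2⟩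
    · rw [aux_eq, if_pos lx, cx]
    · rw [aux_eq, if_pos ly, cy]

theorem mixed_bdd (t : ℕ) : BddAbove {i | 1 ≤ i ∧ MixedA H (algoColAux H t) t i} := by
  apply Set.Finite.bddAbove
  apply Set.Finite.subset ((Finset.range t).image (fun x => (algoCol H x).index)).finite_toSet
  rintro i ⟨h1, h2⟩
  rw [mixed_iff hσ t i h1] at h2
  obtain ⟨x, y, _, _, lx, _, cx, _⟩ := h2
  simp only [Finset.coe_image, Set.mem_image, Finset.mem_coe, Finset.mem_range]
  exact ⟨x, lx, by rw [cx]; rfl⟩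

theorem idx_gt {t i : ℕ} (hi : 1 ≤ i) (h : MixedA H (algoColAux H t) t i) :
    i < (algoCol H t).index := by
  rw [algo_index]
  unfold mIdx
  have := le_csSup (mixed_bdd hσ t) (show i ∈ {i | 1 ≤ i ∧ MixedA H (algoColAux H t) t i} from ⟨hi, h⟩)
  omega

theorem idx_mixed {t : ℕ} (h : 2 ≤ (algoCol H t).index) :
    MixedA H (algoColAux H t) t ((algoCol H t).index - 1) := by
  rw [algo_index] at *
  unfold mIdx at *
  set T := {i | 1 ≤ i ∧ MixedA H (algoColAux H t) t i} with hT
  have hne : T.Nonempty := by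
    by_contra hne
    rw [Set.not_nonempty_iff_eq_empty] at hne
    rw [hne] at h
    simp at h
  have := Nat.sSup_mem hne (mixed_bdd hσ t)
  simpa using this.2

theorem step_cases (t : ℕ) (m : ℕ) (hm : m = (algoCol H t).index) :
    let R := ReachIn H (insert t (Sx (algoCol H) t m))
    let P1 := ∃ u, u < t ∧ R t u ∧ σ u ≠ σ t ∧ algoCol H u = .a m
    let P2 := ∃ u, u < t ∧ R t u ∧ σ u ≠ σ t ∧ algoCol H u = .c m
    let P3 := ∃ u p j, u < t ∧ R t u ∧ R t p ∧ σ p ≠ σ t ∧ hasColorIndex (algoCol H) u j ∧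
      ((m : ℝ) - Real.sqrt (2 * m) + 2 ≤ (j : ℝ)) ∧ UnivTo H (algoColAux H t) t j u p
    (P1 ∧ algoCol H t = .b m) ∨ (¬ P1 ∧ P2 ∧ algoCol H t = .a m) ∨
    (¬ P1 ∧ P3 ∧ algoCol H t = .c m) ∨ (¬ P1 ∧ ¬ P3 ∧ algoCol H t = .a m) := by
  intro R P1 P2 P3
  have hm1 : 1 ≤ m := hm ▸ algo_index_pos H t
  have hs := algoCol_step H t
  unfold step at hs
  simp only at hs
  have hmi := algo_index H t
  rw [← hm] at hmi
  rw [← hmi] at hs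
  have hlt : ∀ u, R t u → σ u ≠ σ t → u < t := by
    intro u h1 h2
    rcases h1.2.1 with e | e
    · exact absurd (by rw [e]) h2
    · exact e.1
  have e2 : ∀ u, u ∈ {x | x ∈ comp H (algoColAux H t) t m t ∧
      ¬ EvenReachIn H (domSet (algoColAux H t) t m t) t x} ↔ (R t u ∧ σ u ≠ σ t) := by
    intro u
    simp only [comp, dom_eq, even_iff hσ, Set.mem_setOf_eq]
    constructor
    · rintro ⟨h1, h2⟩
      exact ⟨h1, fun e => h2 ⟨h1, e.symm⟩⟩
    · rintro ⟨h1, h2⟩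
      exact ⟨h1, fun e => h2 e.2.symm⟩
  have e1 : ∀ u, u ∈ {x | x ∈ comp H (algoColAux H t) t m t ∧
      EvenReachIn H (domSet (algoColAux H t) t m t) t x} ∪ {x | x ∈ comp H (algoColAux H t) t m t ∧
      ¬ EvenReachIn H (domSet (algoColAux H t) t m t) t x} ↔ R t u := by
    intro u
    simp only [comp, dom_eq, Set.mem_union, Set.mem_setOf_eq]
    tauto
  have q1 : (∃ u ∈ {x | x ∈ comp H (algoColAux H t) t m t ∧
      ¬ EvenReachIn H (domSet (algoColAux H t) t m t) t x}, algoColAux H t u = .a m) ↔ P1 := by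
    constructor
    · rintro ⟨u, hu, h⟩
      rw [e2] at hu
      have := hlt u hu.1 hu.2
      rw [aux_eq, if_pos this] at h
      exact ⟨u, this, hu.1, hu.2, h⟩
    · rintro ⟨u, h1, h2, h3, h4⟩
      exact ⟨u, (e2 u).2 ⟨h2, h3⟩, by rw [aux_eq, if_pos h1, h4]⟩
  have q2 : (∃ u ∈ {x | x ∈ comp H (algoColAux H t) t m t ∧
      ¬ EvenReachIn H (domSet (algoColAux H t) t m t) t x}, algoColAux H t u = .c m) ↔ P2 := by
    constructor
    · rintro ⟨u, hu, h⟩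
      rw [e2] at hu
      have := hlt u hu.1 hu.2
      rw [aux_eq, if_pos this] at h
      exact ⟨u, this, hu.1, hu.2, h⟩
    · rintro ⟨u, h1, h2, h3, h4⟩
      exact ⟨u, (e2 u).2 ⟨h2, h3⟩, by rw [aux_eq, if_pos h1, h4]⟩
  have q3 : (∃ u ∈ {x | x ∈ comp H (algoColAux H t) t m t ∧
      EvenReachIn H (domSet (algoColAux H t) t m t) t x} ∪ {x | x ∈ comp H (algoColAux H t) t m t ∧
      ¬ EvenReachIn H (domSet (algoColAux H t) t m t) t x},
      ∃ u' ∈ {x | x ∈ comp H (algoColAux H t) t m t ∧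
      ¬ EvenReachIn H (domSet (algoColAux H t) t m t) t x}, ∃ j : ℕ,
      hasColorIndex (algoColAux H t) u j ∧
      ((m : ℝ) - Real.sqrt (2 * m) + 2 ≤ (j : ℝ)) ∧ UnivTo H (algoColAux H t) t j u u') ↔ P3 := by
    constructor
    · rintro ⟨u, hu, p, hp, j, h1, h2, h3⟩
      rw [e1] at hu
      rw [e2] at hp
      by_cases hut : u < t
      · refine ⟨u, p, j, hut, hu, hp.1, hp.2, ?_, h2, h3⟩
        unfold hasColorIndex at *
        rw [aux_eq, if_pos hut] at h1
        exact h1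
      · exfalso
        unfold hasColorIndex at h1
        rw [aux_eq, if_neg hut] at h1
        have hj : j = 0 := by simpa [eq_comm] using h1
        subst hj
        have hm' : (1 : ℝ) ≤ m := by exact_mod_cast hm1
        have : Real.sqrt (2 * m) < m + 2 := by
          rw [Real.sqrt_lt' (by positivity)]
          nlinarith
        push_cast at h2
        linarith
    · rintro ⟨u, p, j, hut, hu, hp, hp', h1, h2, h3⟩
      refine ⟨u, (e1 u).2 hu, p, (e2 p).2 ⟨hp, hp'⟩, j, ?_, h2, h3⟩
      unfold hasColorIndex at *
      rw [aux_eq, if_pos hut]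
      exact h1
  rw [q1, q2, q3] at hs
  by_cases h1 : P1
  · rw [if_pos h1] at hs; exact Or.inl ⟨h1, hs⟩
  rw [if_neg h1] at hs
  by_cases h2 : P2
  · rw [if_pos h2] at hs; exact Or.inr (Or.inl ⟨h1, h2, hs⟩)
  rw [if_neg h2] at hs
  by_cases h3 : P3
  · rw [if_pos h3] at hs; exact Or.inr (Or.inr (Or.inl ⟨h1, h3, hs⟩))
  rw [if_neg h3] at hs
  exact Or.inr (Or.inr (Or.inr ⟨h1, h3, hs⟩))

theorem algo_mono (t : ℕ) : ∀ i x y, 1 ≤ i → ReachIn H (Sx (algoCol H) t i) x y →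
    algoCol H x = .a i → algoCol H y = .a i → σ x = σ y := by
  induction t with
  | zero => intro i x y _ h; exact absurd h.1.1 (by omega)
  | succ t ih =>
    intro i x y hi h cx cy
    by_cases ht : i < (algoCol H t).index
    · refine ih i x y hi (ri_mono ?_ h) cx cy
      rintro w ⟨h1, h2⟩
      refine ⟨?_, h2⟩
      rcases Nat.lt_succ_iff_lt_or_eq.1 h1 with h3 | h3
      · exact h3
      · subst h3; omega
    · have hsub : Sx (algoCol H) (t+1) i ⊆ insert t (Sx (algoCol H) t i) := by
        rintro w ⟨h1, h2⟩
        rcases Nat.lt_succ_iff_lt_or_eq.1 h1 with h3 | h3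
        · exact Or.inr ⟨h3, h2⟩
        · exact Or.inl h3
      have h' := ri_mono hsub h
      by_cases hxt : ReachIn H (insert t (Sx (algoCol H) t i)) x t
      · by_contra hne
        have r1 := ri_symm hxt
        have r2 := ri_trans r1 h'
        have key : ∀ y, algoCol H t = .a i → algoCol H y = .a i → σ y ≠ σ t →
            ReachIn H (insert t (Sx (algoCol H) t i)) t y → False := by
          intro y h1 h2 h3 h4
          have hyt : y < t := by
            rcases h4.2.1 with e | e
            · exact absurd (by rw [e]) h3
            · exact e.1
          have := step_cases hσ t i (by rw [h1]; rfl)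
          simp only [h1] at this
          simp only [PalColor.a.injEq, reduceCtorEq, and_false, false_or, and_true] at this
          have h5 : ∃ u, u < t ∧ ReachIn H (insert t (Sx (algoCol H) t i)) t u ∧ σ u ≠ σ t ∧
            algoCol H u = .a i := ⟨y, hyt, h4, h3, h2⟩
          rcases this with h6 | h6
          · exact h6.1 h5
          · exact h6.1 h5
        by_cases hx : x = t
        · subst hx
          exact key y cx cy (Ne.symm hne) r2
        by_cases hy : y = t
        · subst hy
          exact key x cy cx hne r1
        apply ht
        apply idx_gt hσ hi
        rw [mixed_iff hσ t i hi]
        refine ⟨x, y, r1, r2, ?_, ?_, cx, cy, hne⟩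
        · rcases r1.2.1 with e | e
          · exact absurd e hx
          · exact e.1
        · rcases r2.2.1 with e | e
          · exact absurd e hy
          · exact e.1
      · exact ih i x y hi (ri_remove h' hxt) cx cy

theorem algo_ch (v : ℕ) (hv : 2 ≤ (algoCol H v).index) : ∃ v1 v2 p1 p2, H.Adj v p1 ∧ H.Adj v p2 ∧
    ReachIn H (Sx (algoCol H) v ((algoCol H v).index - 1)) p1 v1 ∧
    ReachIn H (Sx (algoCol H) v ((algoCol H v).index - 1)) p2 v2 ∧
    algoCol H v1 = .a ((algoCol H v).index - 1) ∧ algoCol H v2 = .a ((algoCol H v).index - 1) ∧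
    σ v1 = σ v ∧ σ v2 ≠ σ v := by
  have h := idx_mixed hσ hv
  rw [mixed_iff hσ _ _ (by omega)] at h
  obtain ⟨x, y, hx, hy, lx, ly, cx, cy, h⟩ := h
  obtain ⟨p, hp, hp'⟩ := ri_insert hx (by omega)
  obtain ⟨q, hq, hq'⟩ := ri_insert hy (by omega)
  by_cases e : σ x = σ v
  · exact ⟨x, y, p, q, hp, hq, hp', hq', cx, cy, e, fun e' => h (e.trans e'.symm)⟩
  · refine ⟨y, x, q, p, hq, hp, hq', hp', cy, cx, ?_, e⟩
    cases h1 : σ x <;> cases h2 : σ y <;> cases h3 : σ v <;> simp_all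

theorem algoF : AlgF H σ (algoCol H) where
  hσ := hσ
  idx := algo_index_pos H
  mono := algo_mono hσ
  ch := algo_ch hσ
  ca := by
    intro v m hv
    have := step_cases hσ v m (by rw [hv]; rfl)
    simp only [hv, PalColor.a.injEq, reduceCtorEq, and_false, false_or, and_true] at this
    rcases this with ⟨_, z, _, h1, h2, h3⟩ | ⟨_, h⟩
    · exact Or.inl ⟨z, h3, h1, h2⟩
    · right
      intro u p j h1 h2 h3 h4 h5 h6 h7
      apply h
      refine ⟨u, p, j, h4, h1, h2, h3, Or.inl h5, h6, ?_⟩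
      unfold UnivTo comp
      simp only [dom_eq, even_iff hσ, Set.mem_setOf_eq]
      by_cases e : σ u = σ p
      · right
        intro x hx hx'
        refine h7 x hx fun e' => hx' ⟨hx, by rw [e, e']⟩
      · left
        intro x hx hx'
        exact h7 x hx fun e' => e (hx'.2.trans e')
  cc := by
    intro z m hz
    have := step_cases hσ z m (by rw [hz]; rfl)
    simp only [hz, PalColor.c.injEq, reduceCtorEq, and_false, false_or, and_true, or_false] at this
    obtain ⟨_, u, p, j, h1, h2, h3, h4, h5, h6, h7⟩ := this
    have hj : (algoCol H u).index = j := by rcases h5 with e | e <;> rw [e] <;> rfl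
    have hj2 : 2 ≤ j := by
      by_contra hlt
      have : (j : ℝ) ≤ 1 := by exact_mod_cast (by omega : j ≤ 1)
      have h0 : (0:ℝ) ≤ m := by positivity
      have : Real.sqrt (2 * m) < m + 1 := by
        rw [Real.sqrt_lt' (by positivity)]
        nlinarith
      linarith
    refine ⟨u, p, j, h2, h3, h4, h1, hj, hj2, h6, ?_⟩
    unfold UnivTo comp at h7
    simp only [dom_eq, even_iff hσ, Set.mem_setOf_eq] at h7
    obtain ⟨v1, v2, p1, p2, a1, a2, r1, r2, -⟩ := algo_ch hσ u (by omega)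
    rw [hj] at r1
    have hp1 : ReachIn H (insert u (Sx (algoCol H) z (j-1))) u p1 := by
      refine ri_adj (Set.mem_insert _ _) (Or.inr ?_) a1
      exact Sx_mono h1.le le_rfl r1.1
    rcases h7 with h7 | h7
    · have h8 := h7 u (ri_refl (Set.mem_insert _ _)) ⟨ri_refl (Set.mem_insert _ _), rfl⟩
      have h9 := hσ _ _ h8
      intro x hx hx'
      refine h7 x hx ⟨hx, ?_⟩
      cases e1 : σ x <;> cases e2 : σ p <;> cases e3 : σ u <;> simp_all
    · have h8 := h7 p1 hp1 (fun e => hσ _ _ a1 e.2)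
      have h9 := hσ _ _ h8
      have h10 := hσ _ _ a1
      intro x hx hx'
      refine h7 x hx (fun e => ?_)
      have := e.2
      cases e1 : σ x <;> cases e2 : σ p <;> cases e3 : σ u <;> simp_all
  cb := by
    intro z m hz
    have := step_cases hσ z m (by rw [hz]; rfl)
    simp only [hz, PalColor.b.injEq, reduceCtorEq, and_false, false_or, and_true, or_false] at this
    obtain ⟨u, h1, _, _, h4⟩ := this
    exact ⟨u, h1, h4⟩

end
/-! ### Part III: structure -/

def ZE (k : ℕ) (H : SimpleGraph ℕ) (σ : ℕ → Bool) (s : Bool) (P : ℕ → Prop) : Prop :=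
  ∃ f : ZV k → ℕ, Function.Injective f ∧ (∀ a b, H.Adj (f a) (f b) ↔ zadj k a b) ∧
    (∀ a, σ (f a) = xor (zsd k a) s) ∧ ∀ a, P (f a)

theorem ZE.imp {k : ℕ} {H : SimpleGraph ℕ} {σ : ℕ → Bool} {s : Bool} {P Q : ℕ → Prop}
    (h : ZE k H σ s P) (hPQ : ∀ v, P v → Q v) : ZE k H σ s Q := by
  obtain ⟨f, h1, h2, h3, h4⟩ := h
  exact ⟨f, h1, h2, h3, fun a => hPQ _ (h4 a)⟩

theorem ze_base {H : SimpleGraph ℕ} {σ : ℕ → Bool} (hσ : ∀ x y, H.Adj x y → σ x ≠ σ y)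
    {P : ℕ → Prop} {b y : ℕ} (h : H.Adj b y) (hb : P b) (hy : P y) (s : Bool) :
    ZE 0 H σ s P := by
  have key : ∀ b y, H.Adj b y → P b → P y → σ b = s → ZE 0 H σ s P := by
    intro b y h hb hy hs
    have hne := h.ne
    have hne' := hne.symm
    have hs' := hσ _ _ h
    have h' := h.symm
    have hs2 : σ y = !s := by
      rw [hs] at hs'
      cases e1 : σ y <;> cases s <;> simp_all
    refine ⟨fun v => match v with | .base t => if t then y else b, ?_, ?_, ?_, ?_⟩
    · rintro ⟨a⟩ ⟨a'⟩ e
      cases a <;> cases a' <;> simp_all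
    · rintro ⟨a⟩ ⟨a'⟩
      cases a <;> cases a' <;> simp [zadj, h, h']
    · rintro ⟨a⟩
      cases a <;> simp [zsd, hs, hs2]
    · rintro ⟨a⟩
      cases a <;> simp [hb, hy]
  by_cases hs : σ b = s
  · exact key b y h hb hy hs
  · refine key y b h.symm hy hb ?_
    have := hσ _ _ h
    cases e1 : σ y <;> cases e2 : σ b <;> cases s <;> simp_all

theorem ze_join {k : ℕ} {H : SimpleGraph ℕ} {σ : ℕ → Bool} (hσ : ∀ x y, H.Adj x y → σ x ≠ σ y)
    {P1 P2 : ℕ → Prop} {p : ℕ} {s1 s2 : Bool} (hs1 : s1 = σ p) (hs2 : s2 ≠ σ p)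
    (h1 : ZE k H σ s1 P1) (h2 : ZE k H σ s2 P2)
    (hno : ∀ x y, P1 x → P2 y → x ≠ y ∧ ¬ H.Adj x y)
    (hp1 : ∀ x, P1 x → x ≠ p ∧ (σ x ≠ σ p → H.Adj p x))
    (hp2 : ∀ x, P2 x → x ≠ p ∧ (σ x ≠ σ p → H.Adj p x)) :
    ZE (k+1) H σ (σ p) (fun v => v = p ∨ P1 v ∨ P2 v) := by
  obtain ⟨f1, i1, a1, b1, c1⟩ := h1
  obtain ⟨f2, i2, a2, b2, c2⟩ := h2
  subst hs1
  have hs2' : s2 = !(σ p) := by cases s2 <;> cases e : σ p <;> simp_all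
  subst hs2'
  let f : ZV (k+1) → ℕ := fun v => match v with
    | .root => p
    | .cl v => f1 v
    | .cr v => f2 v
  have hsd : ∀ a, σ (f a) = xor (zsd (k+1) a) (σ p) := by
    rintro (_|_|v|v)
    · simp [f, zsd]
    · simp [f, zsd, b1]
    · simp [f, zsd, b2]
  have hroot : ∀ a, H.Adj p (f a) ↔ zsd (k+1) a = true := by
    intro a
    have h3 := hsd a
    constructor
    · intro h
      have := hσ _ _ h
      rw [h3] at this
      cases e : zsd (k+1) a <;> simp_all
    · intro h
      have h4 : σ (f a) ≠ σ p := by rw [h3, h]; simp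
      rcases a with (_|_|v|v)
      · simp [zsd] at h
      · exact (hp1 _ (c1 v)).2 h4
      · exact (hp2 _ (c2 v)).2 h4
  refine ⟨f, ?_, ?_, hsd, ?_⟩
  · rintro (_|_|v|v) (_|_|w|w) h
    · rfl
    · exact absurd h.symm (hp1 _ (c1 w)).1
    · exact absurd h.symm (hp2 _ (c2 w)).1
    · exact absurd h (hp1 _ (c1 v)).1
    · rw [i1 h]
    · exact absurd h (hno _ _ (c1 v) (c2 w)).1
    · exact absurd h (hp2 _ (c2 v)).1
    · exact absurd h.symm (hno _ _ (c1 w) (c2 v)).1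
    · rw [i2 h]
  · rintro (_|_|v|v) w
    · rw [zadj_root_left]; exact hroot w
    · rcases w with (_|_|w|w)
      · rw [zadj_root_right, H.adj_comm]; exact hroot (ZV.cl v)
      · simpa [f, zadj] using a1 v w
      · simpa [f, zadj] using (hno _ _ (c1 v) (c2 w)).2
    · rcases w with (_|_|w|w)
      · rw [zadj_root_right, H.adj_comm]; exact hroot (ZV.cr v)
      · rw [H.adj_comm]; simpa [f, zadj] using (hno _ _ (c1 w) (c2 v)).2
      · simpa [f, zadj] using a2 v w
  · rintro (_|_|v|v)
    · exact Or.inl rfl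
    · exact Or.inr (Or.inl (c1 v))
    · exact Or.inr (Or.inr (c2 v))

theorem path9 {H : SimpleGraph ℕ} (hP : PFree H 9) (f : Fin 9 → ℕ)
    (hf : ∀ a b : Fin 9, a < b → (H.Adj (f a) (f b) ↔ a.val + 1 = b.val)) : False := by
  have hadj : ∀ a b : Fin 9, H.Adj (f a) (f b) ↔ (a.val + 1 = b.val ∨ b.val + 1 = a.val) := by
    intro a b
    rcases lt_trichotomy a b with h | h | h
    · rw [hf a b h]
      have : a.val < b.val := h
      omega
    · subst h
      simp
    · rw [H.adj_comm, hf b a h]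
      have : b.val < a.val := h
      omega
  refine hP ⟨f, ?_, hadj⟩
  intro a b h
  have h1 : ∀ d : Fin 9, (a.val + 1 = d.val ∨ d.val + 1 = a.val) ↔
      (b.val + 1 = d.val ∨ d.val + 1 = b.val) := by
    intro d
    rw [← hadj a d, ← hadj b d, h]
  have key : ∀ a b : Fin 9, (∀ d : Fin 9, (a.val + 1 = d.val ∨ d.val + 1 = a.val) ↔
      (b.val + 1 = d.val ∨ d.val + 1 = b.val)) → a = b := by decide
  exact key a b h1

def NoP5 (H : SimpleGraph ℕ) (S : Set ℕ) (g z : ℕ) : Prop :=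
  ∀ p1 p2 p3 p4, ReachIn H S g p1 → ReachIn H S g p2 → ReachIn H S g p3 → ReachIn H S g p4 →
    H.Adj z p1 → H.Adj p1 p2 → H.Adj p2 p3 → H.Adj p3 p4 → ¬ H.Adj z p3 → H.Adj p1 p4

theorem noP5_or {H : SimpleGraph ℕ} {σ : ℕ → Bool} (hσ : ∀ x y, H.Adj x y → σ x ≠ σ y)
    (hP : PFree H 9) {S : Set ℕ} {g g' z : ℕ}
    (hno : ∀ x y, ReachIn H S g x → ReachIn H S g' y → ¬ H.Adj x y) :
    NoP5 H S g z ∨ NoP5 H S g' z := by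
  by_contra hcon
  push Not at hcon
  obtain ⟨h1, h2⟩ := hcon
  unfold NoP5 at h1 h2
  push Not at h1 h2
  obtain ⟨q1, q2, q3, q4, m1, m2, m3, m4, e1, e2, e3, e4, e5, e6⟩ := h1
  obtain ⟨p1, p2, p3, p4, n1, n2, n3, n4, d1, d2, d3, d4, d5, d6⟩ := h2
  have hs : ∀ x y, σ x = σ y → ¬ H.Adj x y := fun x y h h' => hσ _ _ h' h
  have tr : ∀ x y w, H.Adj x y → H.Adj y w → ¬ H.Adj x w := by
    intro x y w h h' 
    apply hs
    have a := hσ _ _ h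
    have b := hσ _ _ h'
    cases e1 : σ x <;> cases e2 : σ y <;> cases e3 : σ w <;> simp_all
  have tr4 : ∀ x y w u v, H.Adj x y → H.Adj y w → H.Adj w u → H.Adj u v → ¬ H.Adj x v := by
    intro x y w u v h h' h'' h'''
    apply hs
    have a := hσ _ _ h
    have b := hσ _ _ h'
    have c := hσ _ _ h''
    have d := hσ _ _ h'''
    cases e1 : σ x <;> cases e2 : σ y <;> cases e3 : σ w <;> cases e4 : σ u <;>
      cases e5 : σ v <;> simp_all
  have t1 := tr _ _ _ d1 d2
  have t2 := tr _ _ _ d2 d3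
  have t3 := tr _ _ _ d3 d4
  have t4 := tr4 _ _ _ _ _ d1 d2 d3 d4
  have s1 := tr _ _ _ e2.symm e1.symm
  have s2 := tr _ _ _ e3.symm e2.symm
  have s3 := tr _ _ _ e4.symm e3.symm
  have s4 := tr4 _ _ _ _ _ e4.symm e3.symm e2.symm e1.symm
  have s5 : ¬ H.Adj q3 z := fun h => e5 h.symm
  have s6 : ¬ H.Adj q4 q1 := fun h => e6 h.symm
  have x11 := hno _ _ m1 n1
  have x12 := hno _ _ m1 n2
  have x13 := hno _ _ m1 n3
  have x14 := hno _ _ m1 n4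
  have x21 := hno _ _ m2 n1
  have x22 := hno _ _ m2 n2
  have x23 := hno _ _ m2 n3
  have x24 := hno _ _ m2 n4
  have x31 := hno _ _ m3 n1
  have x32 := hno _ _ m3 n2
  have x33 := hno _ _ m3 n3
  have x34 := hno _ _ m3 n4
  have x41 := hno _ _ m4 n1
  have x42 := hno _ _ m4 n2
  have x43 := hno _ _ m4 n3
  have x44 := hno _ _ m4 n4
  have y1 := e1.symm
  have y2 := e2.symm
  have y3 := e3.symm
  have y4 := e4.symm
  refine path9 hP ![q4, q3, q2, q1, z, p1, p2, p3, p4] ?_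
  intro a b hab
  fin_cases a <;> fin_cases b <;> first | (exfalso; revert hab; decide) | simp [*]

theorem uniform {H : SimpleGraph ℕ} {σ : ℕ → Bool} (hσ : ∀ x y, H.Adj x y → σ x ≠ σ y)
    {S : Set ℕ} {g z s p k0 : ℕ} (hN : NoP5 H S g z) (hs : ReachIn H S g s)
    (hp : ReachIn H S g p) (hzp : H.Adj z p) (hk : ReachIn H {y | y ∈ S ∧ ¬ H.Adj z y} s k0)
    (hpk : H.Adj p k0) : ∀ w, ReachIn H {y | y ∈ S ∧ ¬ H.Adj z y} s w → σ w = σ z → H.Adj p w := by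
  intro w hw hwz
  set T := {y | y ∈ S ∧ ¬ H.Adj z y} with hT
  have hTS : T ⊆ S := fun y hy => hy.1
  have hb : ∀ {a b c : Bool}, a ≠ b → b ≠ c → a = c := by decide
  have hkD : ∀ y, ReachIn H T k0 y → ReachIn H S g y := fun y hy =>
    ri_trans hs (ri_mono hTS (ri_trans hk hy))
  have hzk : σ z = σ k0 := hb (hσ _ _ hzp) (hσ _ _ hpk)
  have main := ri_ind (ri_trans (ri_symm hk) hw) (fun y => (σ y = σ z → H.Adj p y) ∧
    (σ y ≠ σ z → ∃ y', ReachIn H T k0 y' ∧ H.Adj y' y ∧ H.Adj p y')) ?_ ?_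
  · exact main.1 hwz
  · exact ⟨fun _ => hpk, fun h => absurd hzk.symm h⟩
  · intro u v hu hPu huv hv
    refine ⟨fun hvz => ?_, fun hvz => ?_⟩
    · have huz : σ u ≠ σ z := fun e => hσ _ _ huv (e.trans hvz.symm)
      obtain ⟨y', r1, r2, r3⟩ := hPu.2 huz
      exact hN p y' u v hp (hkD _ r1) (hkD _ hu) (hkD _ (ri_step hu huv hv)) hzp r3 r2 huv hu.2.1.2
    · exact ⟨u, hu, huv, hPu.1 (hb (hσ _ _ huv) hvz)⟩

theorem touch {H : SimpleGraph ℕ} {σ : ℕ → Bool} (hσ : ∀ x y, H.Adj x y → σ x ≠ σ y)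
    {S : Set ℕ} {g z s q : ℕ} (hN : NoP5 H S g z) (hs : ReachIn H S g s)
    (hq : ReachIn H S g q) (hzq : H.Adj z q) {C : Set ℕ} (hC : C ⊆ S) (hsC : s ∈ C)
    (hun : ∀ y, ReachIn H C s y → ¬ H.Adj z y) :
    ∃ p, ReachIn H S g p ∧ H.Adj z p ∧ ∀ w, ReachIn H C s w → σ w ≠ σ p → H.Adj p w := by
  have hb : ∀ {a b c : Bool}, a ≠ b → b ≠ c → a = c := by decide
  set T := {y | y ∈ S ∧ ¬ H.Adj z y} with hT
  have hsT : s ∈ T := ⟨hC hsC, hun s (ri_refl hsC)⟩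
  obtain ⟨u, p, r1, r2, r3, r4, r5⟩ := ri_exit (ri_trans (ri_symm hs) hq)
    (fun y => ReachIn H T s y) (ri_refl hsT) (fun h => h.2.1.2 hzq)
  have hzp : H.Adj z p := by
    by_contra h
    exact r4 (ri_step r3 r5 ⟨r2.2.1, h⟩)
  refine ⟨p, ri_trans hs r2, hzp, fun w hw hwp => ?_⟩
  refine uniform hσ hN hs (ri_trans hs r2) hzp r3 r5.symm w ?_ (hb hwp (hσ _ _ hzp.symm))
  refine ri_ind hw (fun y => ReachIn H T s y) (ri_refl hsT) ?_
  intro a b h1 h2 h3 h4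
  exact ri_step h2 h3 ⟨hC h4, hun b (ri_step h1 h3 h4)⟩

section
variable {H : SimpleGraph ℕ} {σ : ℕ → Bool} {c : ℕ → PalColor} (F : AlgF H σ c)
include F

theorem AlgF.child {v m : ℕ} (hm : (c v).index = m) (h2 : 2 ≤ m) (b : Bool) :
    ∃ w q, H.Adj v q ∧ ReachIn H (Sx c v (m-1)) w q ∧ c w = .a (m-1) ∧ σ w = b := by
  obtain ⟨v1, v2, p1, p2, a1, a2, r1, r2, c1, c2, s1, s2⟩ := F.ch v (by omega)
  rw [hm] at r1 r2 c1 c2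
  by_cases hb : σ v = b
  · exact ⟨v1, p1, a1, ri_symm r1, c1, s1.trans hb⟩
  · refine ⟨v2, p2, a2, ri_symm r2, c2, ?_⟩
    cases e1 : σ v <;> cases e2 : σ v2 <;> cases b <;> simp_all

theorem AlgF.sep {t i v1 v2 x y : ℕ} (hi : 1 ≤ i) (c1 : c v1 = .a i) (c2 : c v2 = .a i)
    (hs : σ v1 ≠ σ v2) (hx : ReachIn H (Sx c t i) v1 x) (hy : ReachIn H (Sx c t i) v2 y) :
    x ≠ y ∧ ¬ H.Adj x y := by
  constructor
  · rintro rfl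
    exact hs (F.mono t i v1 v2 hi (ri_trans hx (ri_symm hy)) c1 c2)
  · intro h
    exact hs (F.mono t i v1 v2 hi (ri_trans (ri_step hx h hy.2.1) (ri_symm hy)) c1 c2)

theorem AlgF.univ {k : ℕ}
    (hS : ∀ x m, c x = .a m → 2*(k+2)^2+1 ≤ m →
      ZE k H σ (σ x) (fun v => ReachIn H (insert x (Sx c x m)) x v))
    {p u i : ℕ} (hi : (c u).index = i) (hik : 2*(k+2)^2+2 ≤ i)
    (hu : ∀ x, ReachIn H (insert u (Sx c u (i-1))) u x → σ x ≠ σ p → H.Adj p x) :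
    ZE (k+1) H σ (σ p) (fun v => v = p ∨ ReachIn H (insert u (Sx c u (i-1))) u v) := by
  have hk : 8 ≤ 2*(k+2)^2 := by nlinarith [Nat.zero_le k, sq_nonneg k]
  obtain ⟨w1, q1, a1, r1, c1, s1⟩ := F.child hi (by omega) (σ p)
  obtain ⟨w2, q2, a2, r2, c2, s2⟩ := F.child hi (by omega) (!(σ p))
  have s2' : σ w2 ≠ σ p := by rw [s2]; simp
  have hI : Sx c u (i-1) ⊆ insert u (Sx c u (i-1)) := Set.subset_insert _ _
  have toU : ∀ w q, H.Adj u q → ReachIn H (Sx c u (i-1)) w q → ∀ y, ReachIn H (Sx c u (i-1)) w y →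
      ReachIn H (insert u (Sx c u (i-1))) u y := by
    intro w q ha hr y hy
    exact ri_trans (ri_adj (Set.mem_insert _ _) (hI hr.2.1) ha) (ri_mono hI (ri_trans (ri_symm hr) hy))
  have emb : ∀ w q, ReachIn H (Sx c u (i-1)) w q → c w = .a (i-1) →
      ZE k H σ (σ w) (fun v => ReachIn H (Sx c u (i-1)) w v) := by
    intro w q hr hc
    refine (hS w (i-1) hc (by omega)).imp fun v hv => ri_mono ?_ hv
    intro y hy
    rcases hy with rfl | hy
    · exact hr.1
    · exact Sx_mono hr.1.1.le le_rfl hy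
  have hsep : ∀ x y, ReachIn H (Sx c u (i-1)) w1 x → ReachIn H (Sx c u (i-1)) w2 y →
      x ≠ y ∧ ¬ H.Adj x y := fun x y hx hy =>
    F.sep (by omega) c1 c2 (by rw [s1]; exact s2'.symm) hx hy
  have J := ze_join F.hσ (p := p) s1 s2' (emb w1 q1 r1 c1) (emb w2 q2 r2 c2) hsep ?_ ?_
  · refine J.imp ?_
    rintro v (h | h | h)
    · exact Or.inl h
    · exact Or.inr (toU _ _ a1 r1 _ h)
    · exact Or.inr (toU _ _ a2 r2 _ h)
  · intro x hx
    refine ⟨?_, fun h => hu x (toU _ _ a1 r1 _ hx) h⟩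
    rintro rfl
    exact (hsep x w2 hx (ri_refl r2.1)).2 (hu w2 (toU _ _ a2 r2 _ (ri_refl r2.1)) s2')
  · intro x hx
    refine ⟨?_, fun h => hu x (toU _ _ a2 r2 _ hx) h⟩
    rintro rfl
    obtain ⟨y, q, ha, hr, -, -⟩ := F.child (v := w1) (m := i-1) (by rw [c1]; rfl) (by omega) true
    have hq : ReachIn H (Sx c u (i-1)) w1 q := by
      refine ri_adj r1.1 (Sx_mono r1.1.1.le (by omega) hr.2.1) ha
    refine (hsep q x hq hx).2 (hu q (toU _ _ a1 r1 _ hq) ?_).symm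
    rw [← s1]
    exact (F.hσ _ _ ha).symm

end

/-! ### Part III b: the inductive step -/

theorem sqrt_fact1 {a m j i : ℕ} (hm : 2*a^2+1 ≤ m) (hj : j ≤ m) (hj2 : 2 ≤ j)
    (hi : m + 2 ≤ i + 2*a) : (j : ℝ) - Real.sqrt (2 * j) + 2 ≤ (i : ℝ) := by
  have hm' : (2:ℝ)*a^2+1 ≤ m := by exact_mod_cast hm
  have hj' : (j:ℝ) ≤ m := by exact_mod_cast hj
  have hj2' : (2:ℝ) ≤ j := by exact_mod_cast hj2
  have hi' : (m:ℝ) + 2 ≤ i + 2*a := by exact_mod_cast hi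
  have h1 : (2:ℝ)*a ≤ Real.sqrt (2*m) := by
    apply Real.le_sqrt_of_sq_le
    nlinarith
  have h2 : (2:ℝ) ≤ Real.sqrt (2*j) := by
    apply Real.le_sqrt_of_sq_le
    nlinarith
  have h3 : Real.sqrt (2*j) ≤ Real.sqrt (2*m) := Real.sqrt_le_sqrt (by linarith)
  have h4 : Real.sqrt (2*j) * Real.sqrt (2*j) = 2*j := Real.mul_self_sqrt (by linarith)
  have h5 : Real.sqrt (2*m) * Real.sqrt (2*m) = 2*m := Real.mul_self_sqrt (by linarith)
  nlinarith

theorem sqrt_fact2 {a j i : ℕ} (ha : 3 ≤ a) (hj : 2*a^2 + 7 ≤ j + 2*a)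
    (hi : (j : ℝ) - Real.sqrt (2 * j) + 2 ≤ (i : ℝ)) : 2*(a-1)^2 + 2 ≤ i := by
  obtain ⟨b, rfl⟩ : ∃ b, a = b + 1 := ⟨a - 1, by omega⟩
  simp only [Nat.add_sub_cancel]
  by_contra hcon
  have h1 : i + 1 ≤ 2*b^2 + 2 := by omega
  have h1' : (i:ℝ) + 1 ≤ 2*b^2 + 2 := by exact_mod_cast h1
  have hj' : 2*((b:ℝ)+1)^2 + 7 ≤ j + 2*(b+1) := by exact_mod_cast hj
  have hb : (2:ℝ) ≤ b := by exact_mod_cast (by omega : 2 ≤ b)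
  have h2 : Real.sqrt (2*j) < j - 2*b^2 + 1 := by
    rw [Real.sqrt_lt' (by nlinarith)]
    nlinarith
  linarith

section
variable {H : SimpleGraph ℕ} {σ : ℕ → Bool} {c : ℕ → PalColor}

/-- data for the induction step -/
structure Ctx (H : SimpleGraph ℕ) (σ : ℕ → Bool) (c : ℕ → PalColor) (k x m h : ℕ) : Prop where
  F : AlgF H σ c
  P9 : PFree H 9
  S : ∀ x m, c x = .a m → 2*(k+2)^2+1 ≤ m →
      ZE k H σ (σ x) (fun v => ReachIn H (insert x (Sx c x m)) x v)
  cx : c x = .a m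
  hm : 2*(k+3)^2+1 ≤ m
  hh : h + 2*(k+3) = m + 2
  ng : ¬ ZE (k+1) H σ (σ x) (fun v => ReachIn H (insert x (Sx c x m)) x v)

variable {k x m h : ℕ} (X : Ctx H σ c k x m h)
include X

theorem Ctx.reg {z y : ℕ} (hz : ReachIn H (insert x (Sx c x m)) x z)
    (hy : ReachIn H (insert z (Sx c z m)) z y) : ReachIn H (insert x (Sx c x m)) x y := by
  refine ri_trans hz (ri_mono ?_ hy)
  rintro w (rfl | hw)
  · exact hz.2.1
  · rcases hz.2.1 with e | e
    · subst e; exact Or.inr hw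
    · exact Or.inr (Sx_mono e.1.le le_rfl hw)

theorem Ctx.reg_idx {z : ℕ} (hz : ReachIn H (insert x (Sx c x m)) x z) : (c z).index ≤ m := by
  rcases hz.2.1 with e | e
  · rw [e, X.cx]; exact le_rfl
  · exact e.2

/-- members of a child component are in the region -/
theorem Ctx.reg_D {z j g q y : ℕ} (hz : ReachIn H (insert x (Sx c x m)) x z)
    (hj : (c z).index = j) (hq : H.Adj z q)
    (hgq : ReachIn H (Sx c z (j-1)) g q) (hy : ReachIn H (Sx c z (j-1)) g y) :
    ReachIn H (insert x (Sx c x m)) x y := by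
  have hjm := X.reg_idx hz
  have hsub : Sx c z (j-1) ⊆ insert z (Sx c z m) := fun w hw =>
    Or.inr (Sx_mono le_rfl (by omega) hw)
  refine X.reg hz (ri_trans (ri_adj (Set.mem_insert _ _) (hsub hgq.2.1) hq) ?_)
  exact ri_mono hsub (ri_trans (ri_symm hgq) hy)

theorem Ctx.nuniv {p u i : ℕ} (hp : ReachIn H (insert x (Sx c x m)) x p) (hs : σ p = σ x)
    (hu : ReachIn H (insert x (Sx c x m)) x u) (hi : (c u).index = i) (hik : 2*(k+2)^2+2 ≤ i)
    (hun : ∀ x, ReachIn H (insert u (Sx c u (i-1))) u x → σ x ≠ σ p → H.Adj p x) : False := by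
  apply X.ng
  rw [← hs]
  refine (X.F.univ X.S hi hik hun).imp ?_
  rintro v (rfl | hv)
  · exact hp
  · have := X.reg_idx hu
    refine X.reg hu (ri_mono ?_ hv)
    apply Set.insert_subset_insert
    exact Sx_mono le_rfl (by omega)

/-- `g` is a good child of `z` -/
def GoodCh (H : SimpleGraph ℕ) (σ : ℕ → Bool) (c : ℕ → PalColor) (k x h z j g q : ℕ) : Prop :=
  c g = .a (j-1) ∧ H.Adj z q ∧ ReachIn H (Sx c z (j-1)) g q ∧ NoP5 H (Sx c z (j-1)) g z ∧
  ∀ w i, ReachIn H (Sx c z (j-1)) g w → c w = .a i → (σ z = σ x → h ≤ i) →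
    (σ z ≠ σ x → 2*(k+2)^2+2 ≤ i) →
    ∃ y, ReachIn H (insert w (Sx c z (i-1))) w y ∧ H.Adj z y

theorem Ctx.good {z j : ℕ} (hz : ReachIn H (insert x (Sx c x m)) x z) (cz : c z = .a j)
    (hj : 2 ≤ j) (hjA : σ z = σ x → h + 4 ≤ j) : ∃ g q, GoodCh H σ c k x h z j g q := by
  have hzi : (c z).index = j := by rw [cz]; rfl
  have hjm : j ≤ m := hzi ▸ X.reg_idx hz
  have hσ := X.F.hσ
  have hb : ∀ {a b c : Bool}, a ≠ b → b ≠ c → a = c := by decide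
  have ex : ∃ g q, c g = .a (j-1) ∧ H.Adj z q ∧ ReachIn H (Sx c z (j-1)) g q ∧
      NoP5 H (Sx c z (j-1)) g z := by
    obtain ⟨w1, q1, a1, r1, c1, s1⟩ := X.F.child hzi hj true
    obtain ⟨w2, q2, a2, r2, c2, s2⟩ := X.F.child hzi hj false
    rcases noP5_or hσ X.P9 (S := Sx c z (j-1)) (g := w1) (g' := w2) (z := z)
      (fun x y hx hy => (X.F.sep (by omega) c1 c2 (by rw [s1, s2]; decide) hx hy).2) with h | h
    · exact ⟨w1, q1, c1, a1, r1, h⟩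
    · exact ⟨w2, q2, c2, a2, r2, h⟩
  obtain ⟨g, q, cg, hzq, hgq, hN⟩ := ex
  refine ⟨g, q, cg, hzq, hgq, hN, ?_⟩
  intro w i hw cw hiA hiB
  by_contra hcon
  push Not at hcon
  have hwi : (c w).index = i := by rw [cw]; rfl
  have hij : i ≤ j - 1 := hwi ▸ hw.2.1.2
  have hwz : w < z := hw.2.1.1
  have hC : insert w (Sx c z (i-1)) ⊆ Sx c z (j-1) := by
    rintro y (rfl | hy)
    · exact hw.2.1
    · exact Sx_mono le_rfl (by omega) hy
  obtain ⟨p, hp, hzp, hpu⟩ := touch hσ hN hw hgq hzq hC (Set.mem_insert _ _) hcon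
  have hpz := hσ _ _ hzp
  by_cases hA : σ z = σ x
  · have hsub : Sx c z (j-1) ⊆ insert z (Sx c z j) := fun w hw =>
      Or.inr (Sx_mono le_rfl (by omega) hw)
    have toz : ∀ y, ReachIn H (Sx c z (j-1)) g y → ReachIn H (insert z (Sx c z j)) z y :=
      fun y hy => ri_trans (ri_adj (Set.mem_insert _ _) (hsub hgq.2.1) hzq)
        (ri_mono hsub (ri_trans (ri_symm hgq) hy))
    rcases X.F.ca z j cz with ⟨z', cz', rz', sz'⟩ | hno
    · obtain ⟨u, p', i', ru, rp, sp, huz, hui, hi2, hreal, huniv⟩ := X.F.cc z' j cz'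
      have gz' : ReachIn H (insert x (Sx c x m)) x z' :=
        X.reg hz (ri_mono (Set.insert_subset_insert (Sx_mono le_rfl hjm)) rz')
      have toR : ∀ y, ReachIn H (insert z' (Sx c z' j)) z' y → ReachIn H (insert x (Sx c x m)) x y :=
        fun y hy => X.reg gz' (ri_mono (Set.insert_subset_insert (Sx_mono le_rfl hjm)) hy)
      have hA4 := hjA hA
      have hh := X.hh
      have hm := X.hm
      refine X.nuniv (toR _ rp) (hb sp sz' |>.trans hA) (toR _ ru) hui ?_ ?_
      · have := sqrt_fact2 (a := k+3) (by omega) (by omega) hreal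
        simpa using this
      · intro y hy
        exact huniv y (ri_mono (Set.insert_subset_insert (Sx_mono huz.le le_rfl)) hy)
    · have hh := X.hh
      have := hiA hA
      exact hno w p i (toz w hw) (toz p hp) hpz.symm hwz cw
        (sqrt_fact1 X.hm hjm hj (by omega)) hpu
  · refine X.nuniv (X.reg_D hz hzi hzq hgq hp) (hb hpz.symm hA)
      (X.reg_D hz hzi hzq hgq hw) hwi (hiB hA) ?_
    intro y hy
    exact hpu y (ri_mono (Set.insert_subset_insert (Sx_mono hwz.le le_rfl)) hy)

theorem Ctx.adj {z j g q w i : ℕ} (hG : GoodCh H σ c k x h z j g q)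
    (hw : ReachIn H (Sx c z (j-1)) g w) (hs : σ w ≠ σ z) (cw : c w = .a i) (hi : 2 ≤ i)
    (hiA : σ z = σ x → h + 1 ≤ i) (hiB : σ z ≠ σ x → 2*(k+2)^2+3 ≤ i) : H.Adj z w := by
  by_contra hzw
  obtain ⟨cg, hzq, hgq, hN, ht⟩ := hG
  have hσ := X.F.hσ
  have hb : ∀ {a b c : Bool}, a ≠ b → b ≠ c → a = c := by decide
  have hwi : (c w).index = i := by rw [cw]; rfl
  have hij : i ≤ j - 1 := hwi ▸ hw.2.1.2
  have hwz : w < z := hw.2.1.1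
  obtain ⟨w1, q1, a1, r1, c1, s1⟩ := X.F.child hwi hi true
  obtain ⟨w2, q2, a2, r2, c2, s2⟩ := X.F.child hwi hi false
  have sub1 : Sx c w (i-1) ⊆ Sx c z (i-1) := Sx_mono hwz.le le_rfl
  have sub2 : Sx c z (i-1) ⊆ Sx c z (j-1) := Sx_mono le_rfl (by omega)
  have r1' := ri_mono sub1 r1
  have r2' := ri_mono sub1 r2
  have hwS := hw.2.1
  have hq1 : ReachIn H (Sx c z (j-1)) g q1 := ri_step hw a1 (sub2 r1'.2.1)
  have hw1 : ReachIn H (Sx c z (j-1)) g w1 := ri_trans hq1 (ri_symm (ri_mono sub2 r1'))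
  obtain ⟨y, hy, hzy⟩ := ht w1 (i-1) hw1 c1 (fun e => by have := hiA e; omega)
    (fun e => by have := hiB e; omega)
  have hy' : ReachIn H (Sx c z (i-1)) w1 y := by
    refine ri_mono ?_ hy
    rintro v (rfl | hv)
    · exact r1'.1
    · exact Sx_mono le_rfl (by omega) hv
  set T := {y | y ∈ Sx c z (j-1) ∧ ¬ H.Adj z y} with hT
  have hwT : w ∈ T := ⟨hwS, hzw⟩
  have hq : ∀ q, H.Adj w q → q ∈ Sx c z (i-1) → ReachIn H T w q ∧ σ q = σ z := by
    intro q h1 h2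
    have e : σ q = σ z := hb (hσ _ _ h1).symm hs
    exact ⟨ri_adj hwT ⟨sub2 h2, fun h3 => hσ _ _ h3 e.symm⟩ h1, e⟩
  obtain ⟨u, p, e1, e2, e3, e4, e5⟩ := ri_exit (ri_trans (ri_symm r1') hy')
    (fun v => ReachIn H T w v) (hq q1 a1 r1'.2.1).1 (fun h => h.2.1.2 hzy)
  have hpD : ReachIn H (Sx c z (j-1)) g p := ri_trans hq1 (ri_mono sub2 e2)
  have hzp : H.Adj z p := by
    by_contra h3
    exact e4 (ri_step e3 e5 ⟨hpD.2.1, h3⟩)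
  have h6 := uniform hσ hN hw hpD hzp e3 e5.symm q2 (hq q2 a2 r2'.2.1).1 (hq q2 a2 r2'.2.1).2
  exact (X.F.sep (by omega) c1 c2 (by rw [s1, s2]; decide) (ri_trans r1' e2) r2').2 h6

def Nd (σ : ℕ → Bool) (c : ℕ → PalColor) (k x h y : ℕ) : Prop :=
  ∃ i, c y = .a i ∧ (σ y = σ x → 2*(k+2)^2+3 ≤ i) ∧ (σ y ≠ σ x → h + 1 ≤ i)

theorem Ctx.hbig : 2*(k+2)^2+4 ≤ h := by
  have h1 := X.hm
  have h2 := X.hh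
  nlinarith

theorem Ctx.adjNd {z j g q w : ℕ} (hG : GoodCh H σ c k x h z j g q)
    (hw : ReachIn H (Sx c z (j-1)) g w) (hs : σ w ≠ σ z) (hn : Nd σ c k x h w) : H.Adj z w := by
  obtain ⟨i, ci, hA, hB⟩ := hn
  have hb : ∀ {a b c : Bool}, a ≠ b → b ≠ c → a = c := by decide
  have hbig := X.hbig
  have h2 : 2 ≤ i := by
    by_cases e : σ w = σ x
    · have := hA e; omega
    · have := hB e; omega
  refine X.adj hG hw hs ci h2 (fun e => hB (fun e' => hs (e'.trans e.symm))) (fun e => hA (hb hs e))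

theorem Ctx.build (r : ℕ) : ∀ w j, c w = .a j → ReachIn H (insert x (Sx c x m)) x w →
    h + 2 + 2*r ≤ j →
    ZE r H σ (σ w) (fun y => Nd σ c k x h y ∧ ReachIn H (insert w (Sx c w (j-1))) w y) := by
  have hbig := X.hbig
  have hσ := X.F.hσ
  have hb : ∀ {a b c : Bool}, a ≠ b → b ≠ c → a = c := by decide
  induction r with
  | zero =>
    intro w j cw hw hj
    have hwi : (c w).index = j := by rw [cw]; rfl
    -- pick b
    have exb : ∃ b jb, c b = .a jb ∧ σ b ≠ σ x ∧ h + 1 ≤ jb ∧ jb ≤ j ∧ b ≤ w ∧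
        ReachIn H (insert w (Sx c w (j-1))) w b ∧ ReachIn H (insert x (Sx c x m)) x b := by
      by_cases e : σ w = σ x
      · obtain ⟨b, q, ha, hr, cb, sb⟩ := X.F.child hwi (by omega) (!(σ x))
        have hsub : Sx c w (j-1) ⊆ insert w (Sx c w (j-1)) := Set.subset_insert _ _
        refine ⟨b, j-1, cb, by rw [sb]; simp, by omega, by omega, hr.1.1.le, ?_, ?_⟩
        · exact ri_trans (ri_adj (Set.mem_insert _ _) (hsub hr.2.1) ha) (ri_mono hsub (ri_symm hr))
        · exact X.reg_D hw hwi ha hr (ri_refl hr.1)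
      · exact ⟨w, j, cw, e, by omega, le_rfl, le_rfl, ri_refl (Set.mem_insert _ _), hw⟩
    obtain ⟨b, jb, cb, sb, hjb, hjb', hbw, rb, Rb⟩ := exb
    have hbi : (c b).index = jb := by rw [cb]; rfl
    obtain ⟨g, q, hG⟩ := X.good Rb cb (by omega) (fun e => absurd e sb)
    obtain ⟨cg, hbq, hgq, hN, ht⟩ := id hG
    have exy : ∃ y, ReachIn H (Sx c b (jb-1)) g y ∧ σ y = σ x ∧ Nd σ c k x h y := by
      by_cases e : σ g = σ x
      · exact ⟨g, ri_refl hgq.1, e, jb-1, cg, fun _ => by omega, fun e' => absurd e e'⟩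
      · obtain ⟨y, q', ha, hr, cy, sy⟩ := X.F.child (v := g) (m := jb-1) (by rw [cg]; rfl)
          (by omega) (σ x)
        have hsub : Sx c g (jb-1-1) ⊆ Sx c b (jb-1) := Sx_mono hgq.1.1.le (by omega)
        refine ⟨y, ?_, sy, jb-1-1, cy, fun _ => by omega, fun e' => absurd sy e'⟩
        exact ri_trans (ri_adj hgq.1 (hsub hr.2.1) ha) (ri_mono hsub (ri_symm hr))
    obtain ⟨y, ry, sy, ny⟩ := exy
    have hby := X.adjNd hG ry (by rw [sy]; exact sb.symm) ny
    refine ze_base hσ hby ⟨⟨jb, cb, fun e => absurd e sb, fun _ => hjb⟩, rb⟩ ⟨ny, ?_⟩ _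
    refine ri_step rb hby (Or.inr (Sx_mono hbw (by omega) ry.2.1))
  | succ r ih =>
    intro w j cw hw hj
    have hwi : (c w).index = j := by rw [cw]; rfl
    obtain ⟨g, q, hG⟩ := X.good hw cw (by omega) (fun e => by omega)
    obtain ⟨cg, hwq, hgq, hN, ht⟩ := id hG
    have hgi : (c g).index = j - 1 := by rw [cg]; rfl
    have hgR := X.reg_D hw hwi hwq hgq (ri_refl hgq.1)
    obtain ⟨g1, q1, a1, r1, c1, s1⟩ := X.F.child hgi (by omega) (σ w)
    obtain ⟨g2, q2, a2, r2, c2, s2⟩ := X.F.child hgi (by omega) (!(σ w))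
    have s2' : σ g2 ≠ σ w := by rw [s2]; simp
    have hsub : Sx c g (j-1-1) ⊆ Sx c w (j-1) := Sx_mono hgq.1.1.le (by omega)
    have emb : ∀ g' q', H.Adj g q' → ReachIn H (Sx c g (j-1-1)) g' q' → c g' = .a (j-1-1) →
        ZE r H σ (σ g') (fun y => Nd σ c k x h y ∧ ReachIn H (Sx c g (j-1-1)) g' y) := by
      intro g' q' ha hr hc
      refine (ih g' (j-1-1) hc (X.reg_D hgR hgi ha hr (ri_refl hr.1)) (by omega)).imp ?_
      rintro v ⟨h1, h2⟩
      refine ⟨h1, ri_mono ?_ h2⟩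
      rintro y (rfl | hy)
      · exact hr.1
      · exact Sx_mono hr.1.1.le (by omega) hy
    have toD : ∀ g' q', H.Adj g q' → ReachIn H (Sx c g (j-1-1)) g' q' →
        ∀ y, ReachIn H (Sx c g (j-1-1)) g' y → ReachIn H (Sx c w (j-1)) g y := by
      intro g' q' ha hr y hy
      exact ri_trans (ri_adj hgq.1 (hsub hr.2.1) ha) (ri_mono hsub (ri_trans (ri_symm hr) hy))
    have hD : ∀ y, ReachIn H (Sx c w (j-1)) g y → ReachIn H (insert w (Sx c w (j-1))) w y := by
      intro y hy
      have hsub : Sx c w (j-1) ⊆ insert w (Sx c w (j-1)) := Set.subset_insert _ _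
      exact ri_trans (ri_adj (Set.mem_insert _ _) (hsub hgq.2.1) hwq)
        (ri_mono hsub (ri_trans (ri_symm hgq) hy))
    have hside : ∀ y, Nd σ c k x h y → ReachIn H (Sx c w (j-1)) g y →
        y ≠ w ∧ (σ y ≠ σ w → H.Adj w y) := by
      intro y hn hy
      refine ⟨?_, fun e => X.adjNd hG hy e hn⟩
      rintro rfl
      exact absurd hy.2.1.1 (lt_irrefl _)
    have J := ze_join hσ (p := w) s1 s2' (emb g1 q1 a1 r1 c1) (emb g2 q2 a2 r2 c2) ?_ ?_ ?_
    · refine J.imp ?_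
      rintro v (rfl | ⟨h1, h2⟩ | ⟨h1, h2⟩)
      · exact ⟨⟨j, cw, fun _ => by omega, fun _ => by omega⟩, ri_refl (Set.mem_insert _ _)⟩
      · exact ⟨h1, hD _ (toD _ _ a1 r1 _ h2)⟩
      · exact ⟨h1, hD _ (toD _ _ a2 r2 _ h2)⟩
    · rintro u v ⟨-, hu⟩ ⟨-, hv⟩
      exact X.F.sep (by omega) c1 c2 (by rw [s1]; exact s2'.symm) hu hv
    · rintro y ⟨h1, h2⟩
      exact hside y h1 (toD _ _ a1 r1 _ h2)
    · rintro y ⟨h1, h2⟩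
      exact hside y h1 (toD _ _ a2 r2 _ h2)

end

theorem struct {H : SimpleGraph ℕ} {σ : ℕ → Bool} {c : ℕ → PalColor} (F : AlgF H σ c)
    (hP : PFree H 9) (k : ℕ) : ∀ x m, c x = .a m → 2*(k+2)^2+1 ≤ m →
      ZE k H σ (σ x) (fun v => ReachIn H (insert x (Sx c x m)) x v) := by
  induction k with
  | zero =>
    intro x m cx hm
    obtain ⟨w, q, ha, hr, -, -⟩ := F.child (v := x) (m := m) (by rw [cx]; rfl) (by omega) true
    refine ze_base F.hσ ha (ri_refl (Set.mem_insert _ _)) ?_ _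
    exact ri_adj (Set.mem_insert _ _) (Or.inr (Sx_mono le_rfl (by omega) hr.2.1)) ha
  | succ k ih =>
    intro x m cx hm
    by_contra ng
    have hm' : 2*(k+3)^2+1 ≤ m := by
      have : k + 1 + 2 = k + 3 := by omega
      rwa [this] at hm
    have hk : 2*(k+3) ≤ m := by nlinarith
    have X : Ctx H σ c k x m (m + 2 - 2*(k+3)) := ⟨F, hP, ih, cx, hm', by omega, ng⟩
    apply ng
    refine (X.build (k+1) x m cx (ri_refl (Set.mem_insert _ _)) (by omega)).imp ?_
    rintro v ⟨-, hv⟩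
    exact ri_mono (Set.insert_subset_insert (Sx_mono le_rfl (by omega))) hv

/-! ### Part IV: conclusion -/

theorem toNat_adj {V : Type} {G : SimpleGraph V} {n : ℕ} {π : Fin n ≃ V} {i j : ℕ} :
    (toNatGraph G π).Adj i j ↔ ∃ (hi : i < n) (hj : j < n), G.Adj (π ⟨i, hi⟩) (π ⟨j, hj⟩) := by
  unfold toNatGraph
  rw [SimpleGraph.fromRel_adj]
  constructor
  · rintro ⟨_, h | ⟨hj, hi, h⟩⟩
    · exact h
    · exact ⟨hi, hj, h.symm⟩
  · rintro ⟨hi, hj, h⟩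
    refine ⟨?_, Or.inl ⟨hi, hj, h⟩⟩
    rintro rfl
    exact G.irrefl h

theorem toNat_emb {V : Type} {G : SimpleGraph V} {n : ℕ} {π : Fin n ≃ V} {W : Type}
    {R : W → W → Prop} (f : W → ℕ) (hf : Function.Injective f)
    (hR : ∀ a b, (toNatGraph G π).Adj (f a) (f b) ↔ R a b) (hnb : ∀ a, ∃ b, R a b) :
    ∃ f' : W → V, Function.Injective f' ∧ ∀ a b, G.Adj (f' a) (f' b) ↔ R a b := by
  have hlt : ∀ a, f a < n := by
    intro a
    obtain ⟨b, hb⟩ := hnb a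
    rw [← hR, toNat_adj] at hb
    exact hb.1
  refine ⟨fun a => π ⟨f a, hlt a⟩, ?_, ?_⟩
  · intro a b h
    have := π.injective h
    simp only [Fin.mk.injEq] at this
    exact hf this
  · intro a b
    rw [← hR, toNat_adj]
    exact ⟨fun h => ⟨hlt a, hlt b, h⟩, fun ⟨_, _, h⟩ => h⟩

theorem toNat_pfree {V : Type} {G : SimpleGraph V} {n : ℕ} {π : Fin n ≃ V} (h : PFree G 9) :
    PFree (toNatGraph G π) 9 := by
  rintro ⟨f, hf, hadj⟩
  obtain ⟨f', h1, h2⟩ := toNat_emb f hf hadj (by decide)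
  exact h ⟨f', h1, h2⟩

theorem z_nb : ∀ (k : ℕ) (a : ZV k), ∃ b, zadj k a b := by
  have hboth : ∀ (k : ℕ) (s : Bool), ∃ b : ZV k, zsd k b = s := by
    intro k
    induction k with
    | zero => intro s; exact ⟨.base s, rfl⟩
    | succ k ih =>
      intro s
      obtain ⟨b, hb⟩ := ih s
      exact ⟨.cl b, hb⟩
  intro k
  induction k with
  | zero =>
    rintro ⟨a⟩
    exact ⟨.base (!a), by cases a <;> simp [zadj]⟩
  | succ k ih =>
    rintro (_|_|v|v)
    · obtain ⟨b, hb⟩ := hboth k true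
      exact ⟨.cl b, hb⟩
    · obtain ⟨b, hb⟩ := ih v
      exact ⟨.cl b, hb⟩
    · obtain ⟨b, hb⟩ := ih v
      exact ⟨.cr b, hb⟩

theorem chrom_mem {V : Type} [Fintype V] (G : SimpleGraph V) :
    ∃ A : OnlineAlg, IsProperAlg A ∧
      ∀ (n : ℕ) (π : Fin n ≃ V), numColors A (G.comap π) ≤ onlineChrom V G := by
  refine Nat.sInf_mem (s := { m : ℕ | ∃ A : OnlineAlg, IsProperAlg A ∧
          ∀ (n : ℕ) (π : Fin n ≃ V), numColors A (G.comap π) ≤ m }) ?_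
  refine ⟨Fintype.card V, fun k _ => k, ?_, ?_⟩
  · intro n G i j h e
    apply h.ne
    exact Fin.ext e
  · intro n π
    unfold numColors
    refine Finset.card_image_le.trans ?_
    simpa using (Fintype.card_congr π).le

theorem a_bound {V : Type} [Fintype V] (G : SimpleGraph V)
    (hP9 : PFree G 9)
    (n : ℕ) (π : Fin n ≃ V) {σ : ℕ → Bool} (F : AlgF (toNatGraph G π) σ (algoCol (toNatGraph G π)))
    (hn : 0 < n) (x m : ℕ) (hx : algoCol (toNatGraph G π) x = .a m) :
    m ≤ 2 * (onlineChrom V G + 1)^2 := by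
  by_contra hcon
  obtain ⟨A, hA, hq⟩ := chrom_mem G
  have h1 : 1 ≤ onlineChrom V G := by
    refine le_trans ?_ (hq n π)
    unfold numColors
    rw [Nat.one_le_iff_ne_zero, ← Nat.pos_iff_ne_zero, Finset.card_pos]
    exact ⟨_, Finset.mem_image_of_mem _ (Finset.mem_univ ⟨0, hn⟩)⟩
  obtain ⟨k, hk⟩ : ∃ k, onlineChrom V G = k + 1 := ⟨onlineChrom V G - 1, by omega⟩
  rw [hk] at hcon hq
  obtain ⟨f, f1, f2, -, -⟩ := struct F (toNat_pfree hP9) k x m hx (by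
    have : k + 1 + 1 = k + 2 := by omega
    rw [this] at hcon
    omega)
  obtain ⟨f', g1, g2⟩ := toNat_emb f f1 f2 (z_nb k)
  have := zforce_chrom G k f' g1 g2 A hA (k+1) hq
  omega

theorem stmt12 {V : Type} [Fintype V] (G : SimpleGraph V)
    (hP9 : PFree G 9)
    (hbip : ∃ side : V → Bool, ∀ x y, G.Adj x y → side x ≠ side y)
    (n : ℕ) (π : Fin n ≃ V) :
    ((Finset.range n).image (algoCol (toNatGraph G π))).card ≤
      6 * (onlineChrom V G + 1) ^ 2 := by
  rcases Nat.eq_zero_or_pos n with rfl | hn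
  · simp
  obtain ⟨side, hside⟩ := hbip
  set H := toNatGraph G π with hH
  have F : AlgF H (fun i => if h : i < n then side (π ⟨i, h⟩) else false) (algoCol H) := by
    apply algoF
    intro x y h
    rw [hH, toNat_adj] at h
    obtain ⟨hx, hy, h⟩ := h
    simp only [hx, hy, dif_pos]
    exact hside _ _ h
  set K := 2 * (onlineChrom V G + 1)^2 with hK
  have hb : ∀ x m, algoCol H x = .a m → m ≤ K := a_bound G hP9 n π F hn
  have hch : ∀ x, 2 ≤ (algoCol H x).index → (algoCol H x).index ≤ K + 1 := by
    intro x hx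
    obtain ⟨w, q, -, -, cw, -⟩ := F.child rfl hx true
    have := hb w _ cw
    omega
  have hsub : (Finset.range n).image (algoCol H) ⊆
      ((Finset.Icc 1 K).image PalColor.a ∪ (Finset.Icc 1 K).image PalColor.b) ∪
        (Finset.Icc 2 (K+1)).image PalColor.c := by
    intro col hcol
    rw [Finset.mem_image] at hcol
    obtain ⟨x, -, rfl⟩ := hcol
    have hi := F.idx x
    have hc := hch x
    simp only [Finset.mem_union, Finset.mem_image, Finset.mem_Icc]
    rcases e : algoCol H x with i | i | i
    · rw [e] at hi
      exact Or.inl (Or.inl ⟨i, ⟨hi, hb x i e⟩, rfl⟩)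
    · rw [e] at hi
      obtain ⟨u, -, hu⟩ := F.cb x i e
      exact Or.inl (Or.inr ⟨i, ⟨hi, hb u i hu⟩, rfl⟩)
    · obtain ⟨u, p, j, ru, -, -, hux, hj, hj2, -⟩ := F.cc x i e
      have hji : j ≤ i := by
        rcases ru.2.1 with h | h
        · omega
        · rw [← hj]; exact h.2
      have h2 : 2 ≤ i := by omega
      rw [e] at hc
      exact Or.inr ⟨i, ⟨h2, hc h2⟩, rfl⟩
  have h1 := Finset.card_le_card hsub
  have h2 := Finset.card_union_le ((Finset.Icc 1 K).image PalColor.a ∪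
    (Finset.Icc 1 K).image PalColor.b) ((Finset.Icc 2 (K+1)).image PalColor.c)
  have h3 := Finset.card_union_le ((Finset.Icc 1 K).image PalColor.a)
    ((Finset.Icc 1 K).image PalColor.b)
  have h4 : ((Finset.Icc 1 K).image PalColor.a).card ≤ K := Finset.card_image_le.trans (by simp)
  have h5 : ((Finset.Icc 1 K).image PalColor.b).card ≤ K := Finset.card_image_le.trans (by simp)
  have h6 : ((Finset.Icc 2 (K+1)).image PalColor.c).card ≤ K :=
    Finset.card_image_le.trans (by simp)
  omega
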